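/- arXiv:2302.09623 — 3 statements merged into one kernel-verified Lean document; each statement's English description precedes it below -/
import Mathlib

section
/- Let p ∈ (1, ∞) with conjugate exponent q = p/(p−1), let F : 𝕋 → ℂ be absolutely continuous with Ḟ ∈ L^p(𝕋), and let f = P[F] be its Poisson integral. Then for every z ∈ 𝔻, max(|f_z(z)|, |f_z̄(z)|) ≤ C_p ‖Ḟ‖_{L^p(𝕋)} / (1 − |z|²)^{1/p}, and consequently |f_z(z)| + |f_z̄(z)| ≤ 2 C_p ‖Ḟ‖_{L^p(𝕋)} / (1 − |z|²)^{1/p}, where C_p = (Γ(q−1) / Γ(q/2)²)^{1/q}. -/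
open MeasureTheory Complex Metric Set Filter
open scoped Real Topology ENNReal

noncomputable section

/-- The Poisson kernel `P(z) = (1-|z|^2)/|1-z|^2`. -/
def poissonKer (z : ℂ) : ℝ := (1 - ‖z‖ ^ 2) / ‖1 - z‖ ^ 2

/-- The Poisson integral of a boundary function `F` defined on the unit circle. -/
def poissonInt (F : ℂ → ℂ) (z : ℂ) : ℂ :=
  (1 / (2 * π)) * ∫ t in (0:ℝ)..(2 * π),
    (poissonKer (z * Complex.exp (-(t : ℂ) * Complex.I)) : ℂ) *
      F (Complex.exp ((t : ℂ) * Complex.I))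

/-- The Poisson integral of a (2π-periodic) function of the angular variable. -/
def poissonIntR (φ : ℝ → ℂ) (z : ℂ) : ℂ :=
  (1 / (2 * π)) * ∫ t in (0:ℝ)..(2 * π),
    (poissonKer (z * Complex.exp (-(t : ℂ) * Complex.I)) : ℂ) * φ t

/-- The conjugate Poisson kernel `P̃(z) = Im((1+z)/(1-z))`. -/
def conjPoissonKer (z : ℂ) : ℝ := ((1 + z) / (1 - z)).im

/-- The conjugate Poisson integral of a function of the angular variable. -/
def conjPoissonIntR (φ : ℝ → ℂ) (z : ℂ) : ℂ :=
  (1 / (2 * π)) * ∫ t in (0:ℝ)..(2 * π),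
    (conjPoissonKer (z * Complex.exp (-(t : ℂ) * Complex.I)) : ℂ) * φ t

/-- Wirtinger derivative `f_z = (1/2)(∂ₓ - i ∂_y) f`. -/
def wdz (f : ℂ → ℂ) (z : ℂ) : ℂ :=
  (1 / 2) * (fderiv ℝ f z 1 - Complex.I * fderiv ℝ f z Complex.I)

/-- Wirtinger derivative `f_z̄ = (1/2)(∂ₓ + i ∂_y) f`. -/
def wdzb (f : ℂ → ℂ) (z : ℂ) : ℂ :=
  (1 / 2) * (fderiv ℝ f z 1 + Complex.I * fderiv ℝ f z Complex.I)

/-- The angular derivative `f_θ(z) = i (z f_z(z) - z̄ f_z̄(z))`. -/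
def fTheta (f : ℂ → ℂ) (z : ℂ) : ℂ :=
  Complex.I * (z * wdz f z - (starRingEnd ℂ) z * wdzb f z)

/-- The radial derivative multiplied by `r`: `r f_r(z) = z f_z(z) + z̄ f_z̄(z)`. -/
def rFr (f : ℂ → ℂ) (z : ℂ) : ℂ :=
  z * wdz f z + (starRingEnd ℂ) z * wdzb f z

/-- `F : 𝕋 → ℂ` is absolutely continuous with angular derivative `Ḟ = Fd`,
i.e. `t ↦ F(e^{it})` is an indefinite integral of the (locally integrable,
2π-periodic) function `Fd`. -/
def IsACDeriv (F : ℂ → ℂ) (Fd : ℝ → ℂ) : Prop :=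
  (∀ a b : ℝ, IntervalIntegrable Fd MeasureTheory.volume a b) ∧
  Function.Periodic Fd (2 * π) ∧
  ∀ t : ℝ, F (Complex.exp ((t : ℂ) * Complex.I)) = F 1 + ∫ s in (0:ℝ)..t, Fd s

/-- membership in `L^p(𝕋)`, identifying `𝕋` with `[0, 2π)`. -/
def MemLpT (p : ℝ≥0∞) (φ : ℝ → ℂ) : Prop :=
  MeasureTheory.MemLp φ p (MeasureTheory.volume.restrict (Ioc (0:ℝ) (2 * π)))

/-- The integral mean `M_p(r, g)`. -/
def Mp (p : ℝ) (g : ℂ → ℂ) (r : ℝ) : ℝ :=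
  ((1 / (2 * π)) * ∫ θ in (0:ℝ)..(2 * π),
      ‖g ((r : ℂ) * Complex.exp ((θ : ℂ) * Complex.I))‖ ^ p) ^ (1 / p)

/-- The `L^p(𝕋)` norm `((1/2π) ∫ |φ|^p)^{1/p}`. -/
def lpNormT (p : ℝ) (φ : ℝ → ℂ) : ℝ :=
  ((1 / (2 * π)) * ∫ t in (0:ℝ)..(2 * π), ‖φ t‖ ^ p) ^ (1 / p)

/-- Membership in the analytic Hardy space `H^p(𝔻)` for `p ∈ [1, ∞)`. -/
def MemHp (p : ℝ) (g : ℂ → ℂ) : Prop :=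
  DifferentiableOn ℂ g (ball (0:ℂ) 1) ∧ ∃ M : ℝ, ∀ r ∈ Ioo (0:ℝ) 1, Mp p g r ≤ M

/-- Membership in `H^∞(𝔻)`: bounded analytic functions on the unit disk. -/
def MemHinf (g : ℂ → ℂ) : Prop :=
  DifferentiableOn ℂ g (ball (0:ℂ) 1) ∧ ∃ M : ℝ, ∀ z ∈ ball (0:ℂ) 1, ‖g z‖ ≤ M

/-- Harmonicity on the unit disk: `f` is C² with vanishing Laplacian. -/
def HarmonicOnD (f : ℂ → ℂ) : Prop :=
  ContDiffOn ℝ 2 f (ball (0:ℂ) 1) ∧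
  ∀ z ∈ ball (0:ℂ) 1,
    fderiv ℝ (fun w => fderiv ℝ f w 1) z 1
      + fderiv ℝ (fun w => fderiv ℝ f w Complex.I) z Complex.I = 0

/-- Membership in the harmonic Hardy space `h^p(𝔻)` for `p ∈ [1, ∞)`. -/
def Memhp (p : ℝ) (g : ℂ → ℂ) : Prop :=
  HarmonicOnD g ∧ ∃ M : ℝ, ∀ r ∈ Ioo (0:ℝ) 1, Mp p g r ≤ M

/-- Membership in `h^∞(𝔻)`: bounded harmonic functions on the unit disk. -/
def Memhinf (g : ℂ → ℂ) : Prop :=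
  HarmonicOnD g ∧ ∃ M : ℝ, ∀ z ∈ ball (0:ℂ) 1, ‖g z‖ ≤ M

/-- `L` is the value of the principal-value Hilbert transform
`(1/2π) p.v. ∫ φ(t)/tan((θ-t)/2) dt` of (the 2π-periodic) `φ` at `θ`. -/
def IsPVHilbert (φ : ℝ → ℂ) (θ : ℝ) (L : ℂ) : Prop :=
  Filter.Tendsto
    (fun ε : ℝ => (1 / (2 * π)) *
      ∫ t in Ioo (θ - π) (θ + π) \ Ioo (θ - ε) (θ + ε),
        φ t / (Real.tan ((θ - t) / 2) : ℂ))
    (nhdsWithin 0 (Ioi 0)) (nhds L)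

/-!
On the unit circle `poissonKer (z / ζ) = ζ / (ζ - z) + conj (ζ / (ζ - z)) - 1`, so `P[F]` is, up to
a constant, the Cauchy integral of `F` plus the conjugate of the Cauchy integral of `conj ∘ F`.
Hence `f_z` and the conjugate of `f_z̄` are the complex derivatives of these two Cauchy integrals.
Differentiating under the integral sign and integrating by parts moves the derivative onto the
boundary function and leaves `(1 / 2πi) ∫ Ḟ(t) (e^{it} - z)⁻¹ dt`, to which Hölder's inequality
applies.

It remains to bound the mean of `|ζ - z|^{-q} = |1 - conj z * ζ|^{-q}` over the circle. By Parseval,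
applied to the binomial series of `(1 - w)^{-q/2}`, this mean is `∑ ((q/2)ₙ / n!)² |z|^{2n}`.
Log-convexity of `Γ` at the midpoint `q/2 + n` of `q - 1 + n` and `n + 1` gives
`((q/2)ₙ / n!)² ≤ Γ(q-1) / Γ(q/2)² * (q-1)ₙ / n!`, and the binomial series of
`(1 - |z|²)^{-(q-1)}` sums the majorant.
-/

theorem sq_Gamma_half_add_le {s t : ℝ} (hs : 0 < s) (ht : 0 < t) :
    Real.Gamma ((s + t) / 2) ^ 2 ≤ Real.Gamma s * Real.Gamma t := by
  have hΓs := (Real.Gamma_pos_of_pos hs).le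
  have hΓt := (Real.Gamma_pos_of_pos ht).le
  have log_convex := Real.Gamma_mul_add_mul_le_rpow_Gamma_mul_rpow_Gamma hs ht
    one_half_pos one_half_pos (add_halves 1)
  rw [← Real.sqrt_eq_rpow, ← Real.sqrt_eq_rpow] at log_convex
  calc Real.Gamma ((s + t) / 2) ^ 2
      = Real.Gamma (1 / 2 * s + 1 / 2 * t) ^ 2 := by ring_nf
    _ ≤ (√(Real.Gamma s) * √(Real.Gamma t)) ^ 2 := by gcongr
    _ = Real.Gamma s * Real.Gamma t := by rw [mul_pow, Real.sq_sqrt hΓs, Real.sq_sqrt hΓt]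

theorem Gamma_add_natCast {a : ℝ} (ha : 0 < a) (n : ℕ) :
    Real.Gamma (a + n) = (ascPochhammer ℝ n).eval a * Real.Gamma a := by
  induction n with
  | zero => simp
  | succ n ih =>
    rw [Nat.cast_succ, ← add_assoc, Real.Gamma_add_one (by positivity), ih,
      ascPochhammer_succ_eval]
    ring

theorem multichoose_eq_Gamma_div {a : ℝ} (ha : 0 < a) (n : ℕ) :
    Ring.multichoose a n = Real.Gamma (a + n) / (Real.Gamma a * n.factorial) := by
  have hpoch := Ring.factorial_nsmul_multichoose_eq_ascPochhammer a n
  rw [Polynomial.ascPochhammer_smeval_eq_eval, nsmul_eq_mul] at hpoch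
  have hΓ := (Real.Gamma_pos_of_pos ha).ne'
  rw [Gamma_add_natCast ha, ← hpoch]
  field_simp

theorem sq_multichoose_half_le {q : ℝ} (hq : 1 < q) (n : ℕ) :
    Ring.multichoose (q / 2) n ^ 2 ≤
      Real.Gamma (q - 1) / Real.Gamma (q / 2) ^ 2 * Ring.multichoose (q - 1) n := by
  have hq1 : 0 < q - 1 := sub_pos.2 hq
  have hΓn : Real.Gamma (q / 2 + n) ^ 2 ≤ Real.Gamma (q - 1 + n) * n.factorial := by
    have h := sq_Gamma_half_add_le (s := q - 1 + n) (t := n + 1) (by positivity) (by positivity)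
    rwa [Real.Gamma_nat_eq_factorial, show (q - 1 + n + (n + 1)) / 2 = q / 2 + n by ring] at h
  rw [multichoose_eq_Gamma_div (by positivity), multichoose_eq_Gamma_div hq1]
  calc (Real.Gamma (q / 2 + n) / (Real.Gamma (q / 2) * n.factorial)) ^ 2
      = Real.Gamma (q / 2 + n) ^ 2 / (Real.Gamma (q / 2) ^ 2 * n.factorial ^ 2) := by
        rw [div_pow, mul_pow]
    _ ≤ Real.Gamma (q - 1 + n) * n.factorial / (Real.Gamma (q / 2) ^ 2 * n.factorial ^ 2) := by
        gcongr
    _ = Real.Gamma (q - 1) / Real.Gamma (q / 2) ^ 2 *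
          (Real.Gamma (q - 1 + n) / (Real.Gamma (q - 1) * n.factorial)) := by
        field_simp

theorem sum_sq_norm_eq_circleAverage (b : ℕ → ℂ) (N : ℕ) :
    ∑ n ∈ Finset.range N, ‖b n‖ ^ 2 =
      Real.circleAverage (fun ζ ↦ ‖∑ n ∈ Finset.range N, b n * ζ ^ n‖ ^ 2) 0 1 := by
  let P : Polynomial ℂ := ∑ n ∈ Finset.range N, Polynomial.monomial n (b n)
  have hcoeff (n : ℕ) : P.coeff n = if n < N then b n else 0 := by
    simp [P, Polynomial.finsetSum_coeff, Polynomial.coeff_monomial]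
  have heval (ζ : ℂ) : P.eval ζ = ∑ n ∈ Finset.range N, b n * ζ ^ n := by
    simp [P, Polynomial.eval_finsetSum]
  have hsupp : P.support ⊆ Finset.range N := fun n hn ↦ by
    by_contra hnN
    simp_all
  simp_rw [← heval]
  rw [← P.sum_sq_norm_coeff_eq_circleAverage]
  refine Eq.trans (Finset.sum_congr rfl fun n hn ↦ ?_)
    (Finset.sum_subset hsupp fun n _ hn ↦ by simpa using hn).symm
  rw [hcoeff, if_pos (Finset.mem_range.1 hn)]

theorem hasSum_sq_norm_circleAverage {b : ℕ → ℂ} (hb : Summable fun n ↦ ‖b n‖) :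
    HasSum (fun n ↦ ‖b n‖ ^ 2)
      (Real.circleAverage (fun ζ ↦ ‖∑' n, b n * ζ ^ n‖ ^ 2) 0 1) := by
  have hnorm (n : ℕ) (t : ℝ) : ‖b n * circleMap 0 1 t ^ n‖ = ‖b n‖ := by
    simp [norm_circleMap_zero]
  rw [hasSum_iff_tendsto_nat_of_nonneg fun n ↦ by positivity]
  simp_rw [sum_sq_norm_eq_circleAverage, Real.circleAverage_def]
  refine Tendsto.const_smul (intervalIntegral.tendsto_integral_filter_of_dominated_convergence
    (fun _ ↦ (∑' n, ‖b n‖) ^ 2) ?_ ?_ (by simp) ?_) _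
  · refine .of_forall fun N ↦ Continuous.aestronglyMeasurable ?_
    have := continuous_circleMap 0 1
    fun_prop
  · refine .of_forall fun N ↦ .of_forall fun t _ ↦ ?_
    rw [norm_pow, norm_norm]
    gcongr
    calc ‖∑ n ∈ Finset.range N, b n * circleMap 0 1 t ^ n‖
        ≤ ∑ n ∈ Finset.range N, ‖b n‖ := norm_sum_le_of_le _ fun n _ ↦ (hnorm n t).le
      _ ≤ ∑' n, ‖b n‖ := hb.sum_le_tsum _ fun _ _ ↦ norm_nonneg _
  · refine .of_forall fun t _ ↦ ?_
    have hsum : Summable fun n ↦ b n * circleMap 0 1 t ^ n :=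
      .of_norm (hb.congr fun n ↦ (hnorm n t).symm)
    exact (hsum.hasSum.tendsto_sum_nat.norm).pow 2

theorem hasSum_multichoose_mul_pow (a : ℂ) {w : ℂ} (hw : ‖w‖ < 1) :
    HasSum (fun n ↦ Ring.multichoose a n * w ^ n) (1 / (1 - w) ^ a) := by
  have h := (Complex.one_div_one_sub_cpow_hasFPowerSeriesOnBall_zero a).hasSum (y := w)
    (by simpa [enorm_eq_nnnorm] using! hw)
  simpa [FormalMultilinearSeries.ofScalars_apply_eq, Ring.multichoose_eq, mul_comm] using h

theorem summable_norm_multichoose_mul_pow (a : ℂ) {w : ℂ} (hw : ‖w‖ < 1) :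
    Summable fun n ↦ ‖Ring.multichoose a n * w ^ n‖ := by
  have hball := (Complex.one_div_one_sub_cpow_hasFPowerSeriesOnBall_zero a).r_le
  have h := FormalMultilinearSeries.summable_norm_apply _ (x := w) <|
    Metric.eball_subset_eball hball (by simpa [enorm_eq_nnnorm] using! hw)
  simpa [FormalMultilinearSeries.ofScalars_apply_eq, Ring.multichoose_eq, mul_comm] using h

theorem hasSum_multichoose_mul_pow_real (a : ℝ) {x : ℝ} (hx : |x| < 1) :
    HasSum (fun n ↦ Ring.multichoose a n * x ^ n) (1 / (1 - x) ^ a) := by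
  have h := (Real.one_div_one_sub_rpow_hasFPowerSeriesOnBall_zero a).hasSum (y := x)
    (by simpa [enorm_eq_nnnorm] using! hx)
  simpa [FormalMultilinearSeries.ofScalars_apply_eq, Ring.multichoose_eq, mul_comm] using h

theorem norm_sub_eq_norm_one_sub_conj_mul {ζ : ℂ} (hζ : ‖ζ‖ = 1) (z : ℂ) :
    ‖ζ - z‖ = ‖1 - starRingEnd ℂ z * ζ‖ := by
  have hone : starRingEnd ℂ ζ * ζ = 1 := by simp [Complex.conj_mul', hζ]
  calc ‖ζ - z‖ = ‖starRingEnd ℂ (ζ - z) * ζ‖ := by rw [norm_mul, Complex.norm_conj, hζ, mul_one]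
    _ = ‖1 - starRingEnd ℂ z * ζ‖ := by rw [map_sub, sub_mul, hone]

theorem hasSum_circleAverage_norm_inv_rpow (a : ℝ) {z : ℂ} (hz : ‖z‖ < 1) :
    HasSum (fun n ↦ Ring.multichoose a n ^ 2 * (‖z‖ ^ 2) ^ n)
      (Real.circleAverage (fun ζ ↦ ‖(ζ - z)⁻¹‖ ^ (2 * a)) 0 1) := by
  have hparseval := hasSum_sq_norm_circleAverage
    (summable_norm_multichoose_mul_pow a (w := starRingEnd ℂ z) (by simpa))
  convert hparseval using 1
  · ext n
    have hreal : Ring.multichoose (a : ℂ) n = (Ring.multichoose a n : ℝ) := by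
      simp [Ring.multichoose_eq, Complex.ofReal_choose]
    simp [hreal, mul_pow, pow_right_comm]
  · refine Real.circleAverage_congr_sphere fun ζ hζ ↦ ?_
    have hζ1 : ‖ζ‖ = 1 := by simpa using hζ
    have hw : ‖starRingEnd ℂ z * ζ‖ < 1 := by simpa [hζ1]
    have hw1 : 1 - starRingEnd ℂ z * ζ ≠ 0 := (isUnit_one_sub_of_norm_lt_one hw).ne_zero
    simp_rw [mul_assoc, ← mul_pow]
    rw [(hasSum_multichoose_mul_pow a hw).tsum_eq, norm_div, Complex.norm_cpow_of_ne_zero hw1,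
      norm_inv, norm_sub_eq_norm_one_sub_conj_mul hζ1]
    simp [Real.inv_rpow, ← Real.rpow_mul_natCast, mul_comm]

theorem circleAverage_norm_inv_rpow_le {q : ℝ} (hq : 1 < q) {z : ℂ} (hz : ‖z‖ < 1) :
    Real.circleAverage (fun ζ ↦ ‖(ζ - z)⁻¹‖ ^ q) 0 1 ≤
      Real.Gamma (q - 1) / Real.Gamma (q / 2) ^ 2 * (1 / (1 - ‖z‖ ^ 2) ^ (q - 1)) := by
  have hmean := hasSum_circleAverage_norm_inv_rpow (q / 2) hz
  rw [mul_div_cancel₀ q two_ne_zero] at hmean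
  have hbinomial := hasSum_multichoose_mul_pow_real (q - 1) (x := ‖z‖ ^ 2)
    (by rwa [abs_of_nonneg (sq_nonneg _), sq_lt_one_iff₀ (norm_nonneg _)])
  refine hasSum_le (fun n ↦ ?_) hmean (hbinomial.mul_left _)
  rw [← mul_assoc]
  gcongr
  exact sq_multichoose_half_le hq n

theorem memLpT_of_continuous (r : ℝ≥0∞) {φ : ℝ → ℂ} (hφ : Continuous φ) : MemLpT r φ := by
  obtain ⟨M, hM⟩ := isCompact_Icc.exists_bound_of_continuousOn (s := Icc 0 (2 * π)) hφ.continuousOn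
  refine MemLp.of_bound hφ.aestronglyMeasurable M ?_
  filter_upwards [ae_restrict_mem measurableSet_Ioc] with t ht using hM t (Ioc_subset_Icc_self ht)

theorem integral_norm_rpow_nonneg (r : ℝ) (φ : ℝ → ℂ) :
    0 ≤ ∫ t in (0:ℝ)..(2 * π), ‖φ t‖ ^ r :=
  intervalIntegral.integral_nonneg Real.two_pi_pos.le fun t _ ↦ by positivity

theorem lpNormT_nonneg (r : ℝ) (φ : ℝ → ℂ) : 0 ≤ lpNormT r φ :=
  Real.rpow_nonneg (mul_nonneg (by positivity) (integral_norm_rpow_nonneg r φ)) _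
theorem memLpT_conj {r : ℝ≥0∞} {φ : ℝ → ℂ} (hφ : MemLpT r φ) :
    MemLpT r fun t ↦ starRingEnd ℂ (φ t) :=
  Complex.conjCLE.toContinuousLinearMap.comp_memLp' hφ

theorem lpNormT_conj (r : ℝ) (φ : ℝ → ℂ) :
    lpNormT r (fun t ↦ starRingEnd ℂ (φ t)) = lpNormT r φ := by
  simp only [lpNormT, Complex.norm_conj]

theorem circleMap_sub_ne_zero {z : ℂ} (hz : ‖z‖ < 1) (t : ℝ) : circleMap 0 1 t - z ≠ 0 :=
  sub_ne_zero.2 (circleMap_ne_mem_ball (by simpa using hz) t)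

theorem continuous_inv_circleMap_sub {z : ℂ} (hz : ‖z‖ < 1) :
    Continuous fun t ↦ (circleMap 0 1 t - z)⁻¹ :=
  continuous_circleMap_inv (by simpa using hz)

theorem lpNormT_inv_circleMap_sub_le {p q : ℝ} (hpq : p.HolderConjugate q) {z : ℂ}
    (hz : ‖z‖ < 1) :
    lpNormT q (fun t ↦ (circleMap 0 1 t - z)⁻¹) ≤
      (Real.Gamma (q - 1) / Real.Gamma (q / 2) ^ 2) ^ (1 / q) / (1 - ‖z‖ ^ 2) ^ (1 / p) := by
  have hq : 1 < q := hpq.symm.lt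
  have hr : 0 < 1 - ‖z‖ ^ 2 := by nlinarith [norm_nonneg z]
  have hmean := circleAverage_norm_inv_rpow_le hq hz
  rw [Real.circleAverage_def, smul_eq_mul, ← one_div] at hmean
  have hexponent : (q - 1) * (1 / q) = 1 / p := by
    rw [← hpq.symm.div_conj_eq_sub_one]
    field_simp [hpq.symm.ne_zero]
  calc lpNormT q (fun t ↦ (circleMap 0 1 t - z)⁻¹)
      ≤ (Real.Gamma (q - 1) / Real.Gamma (q / 2) ^ 2 *
          (1 / (1 - ‖z‖ ^ 2) ^ (q - 1))) ^ (1 / q) :=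
        Real.rpow_le_rpow (mul_nonneg (by positivity) (integral_norm_rpow_nonneg q _)) hmean
          (by positivity)
    _ = _ := by
        rw [mul_one_div, Real.div_rpow (by positivity) (by positivity), ← Real.rpow_mul hr.le,
          hexponent]

theorem norm_integral_mul_le_lpNormT_mul_lpNormT {p q : ℝ} (hpq : p.HolderConjugate q)
    {φ ψ : ℝ → ℂ} (hφ : MemLpT (ENNReal.ofReal p) φ) (hψ : MemLpT (ENNReal.ofReal q) ψ) :
    ‖(1 / (2 * π) : ℂ) * ∫ t in (0:ℝ)..(2 * π), φ t * ψ t‖ ≤ lpNormT p φ * lpNormT q ψ := by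
  have hπ : (0:ℝ) ≤ 2 * π := Real.two_pi_pos.le
  have holder : ∫ t in (0:ℝ)..(2 * π), ‖φ t‖ * ‖ψ t‖ ≤
      (∫ t in (0:ℝ)..(2 * π), ‖φ t‖ ^ p) ^ (1 / p) *
        (∫ t in (0:ℝ)..(2 * π), ‖ψ t‖ ^ q) ^ (1 / q) := by
    simp only [intervalIntegral.integral_of_le hπ]
    exact integral_mul_le_Lp_mul_Lq_of_nonneg hpq (.of_forall fun t ↦ norm_nonneg _)
      (.of_forall fun t ↦ norm_nonneg _) hφ.norm hψ.norm
  have hweight : (1 / (2 * π)) ^ (1 / p) * (1 / (2 * π)) ^ (1 / q) = 1 / (2 * π) := by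
    rw [← Real.rpow_add (by positivity), hpq.one_div_add_one_div, div_one, Real.rpow_one]
  calc ‖(1 / (2 * π) : ℂ) * ∫ t in (0:ℝ)..(2 * π), φ t * ψ t‖
      = 1 / (2 * π) * ‖∫ t in (0:ℝ)..(2 * π), φ t * ψ t‖ := by
        simp [abs_of_pos Real.pi_pos]
    _ ≤ 1 / (2 * π) * ∫ t in (0:ℝ)..(2 * π), ‖φ t‖ * ‖ψ t‖ := by
        gcongr
        simpa using intervalIntegral.norm_integral_le_integral_norm hπ (f := fun t ↦ φ t * ψ t)
    _ ≤ 1 / (2 * π) * ((∫ t in (0:ℝ)..(2 * π), ‖φ t‖ ^ p) ^ (1 / p) *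
        (∫ t in (0:ℝ)..(2 * π), ‖ψ t‖ ^ q) ^ (1 / q)) := by gcongr
    _ = lpNormT p φ * lpNormT q ψ := by
        rw [lpNormT, lpNormT, Real.mul_rpow (by positivity) (integral_norm_rpow_nonneg p φ),
          Real.mul_rpow (by positivity) (integral_norm_rpow_nonneg q ψ), mul_mul_mul_comm, hweight]

theorem intervalIntegral_triangle_swap {E : Type*} [NormedAddCommGroup E] [NormedSpace ℝ E]
    {a b : ℝ} (hab : a ≤ b) {f : ℝ → ℝ → E}
    (hf : IntegrableOn (Function.uncurry f) (Ioc a b ×ˢ Ioc a b)) :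
    ∫ t in a..b, ∫ s in a..t, f t s = ∫ s in a..b, ∫ t in s..b, f t s := by
  let lower : ℝ → ℝ → E := fun t s ↦ {p : ℝ × ℝ | p.2 ≤ p.1}.indicator (Function.uncurry f) (t, s)
  have hlower_s {t : ℝ} (ht : t ∈ Ioc a b) : ∫ s in a..b, lower t s = ∫ s in a..t, f t s := by
    have hind : lower t = (Iic t).indicator (f t) := by ext s; simp [lower, indicator]
    rw [intervalIntegral.integral_of_le hab, intervalIntegral.integral_of_le ht.1.le, hind,
      setIntegral_indicator measurableSet_Iic, Ioc_inter_Iic, min_eq_right ht.2]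
  have hlower_t {s : ℝ} (hs : s ∈ Ioc a b) : ∫ t in a..b, lower t s = ∫ t in s..b, f t s := by
    have hind : (fun t ↦ lower t s) = (Ici s).indicator fun t ↦ f t s := by
      ext t; simp [lower, indicator]
    have hinter : Ioc a b ∩ Ici s = Icc s b := by
      ext t; simp only [mem_inter_iff, mem_Ioc, mem_Ici, mem_Icc]; grind
    rw [intervalIntegral.integral_of_le hab, intervalIntegral.integral_of_le hs.2, hind,
      setIntegral_indicator measurableSet_Ici, hinter, integral_Icc_eq_integral_Ioc]
  have hlower : IntegrableOn (Function.uncurry lower) (uIoc a b ×ˢ uIoc a b) := by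
    rw [uIoc_of_le hab]
    exact hf.indicator (measurableSet_le measurable_snd measurable_fst)
  calc ∫ t in a..b, ∫ s in a..t, f t s
      = ∫ t in a..b, ∫ s in a..b, lower t s := by
        refine intervalIntegral.integral_congr_ae (.of_forall fun t ht ↦ ?_)
        rw [hlower_s (uIoc_of_le hab ▸ ht)]
    _ = ∫ s in a..b, ∫ t in a..b, lower t s := intervalIntegral_intervalIntegral_swap hlower
    _ = ∫ s in a..b, ∫ t in s..b, f t s := by
        refine intervalIntegral.integral_congr_ae (.of_forall fun s hs ↦ ?_)
        rw [hlower_t (uIoc_of_le hab ▸ hs)]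

theorem integral_mul_deriv_of_eq_primitive {𝕜 : Type*} [RCLike 𝕜] {a b : ℝ} (hab : a ≤ b)
    {u φ g g' : ℝ → 𝕜} (hφ : IntervalIntegrable φ volume a b)
    (hu : ∀ t, u t = u a + ∫ s in a..t, φ s)
    (hg : ∀ t, HasDerivAt g (g' t) t) (hg' : Continuous g') :
    ∫ t in a..b, u t * g' t = u b * g b - u a * g a - ∫ t in a..b, φ t * g t := by
  have hgc : Continuous g := continuous_iff_continuousAt.2 fun t ↦ (hg t).continuousAt
  have hg'_int (s t : ℝ) : ∫ x in s..t, g' x = g t - g s :=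
    intervalIntegral.integral_eq_sub_of_hasDerivAt (fun x _ ↦ hg x) (hg'.intervalIntegrable _ _)
  have hprod : IntegrableOn (Function.uncurry fun t s ↦ φ s * g' t) (Ioc a b ×ˢ Ioc a b) := by
    have h := ((hg'.intervalIntegrable (μ := volume) a b).1.mul_prod hφ.1)
    rw [Measure.prod_restrict] at h
    exact h.congr (.of_forall fun _ ↦ mul_comm _ _)
  have hprimitive : IntervalIntegrable (fun t ↦ (∫ s in a..t, φ s) * g' t) volume a b :=
    (intervalIntegral.continuousOn_primitive_interval' hφ left_mem_uIcc).intervalIntegrable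
      |>.mul_continuousOn hg'.continuousOn
  calc ∫ t in a..b, u t * g' t
      = ∫ t in a..b, (u a * g' t + (∫ s in a..t, φ s) * g' t) := by
        simp only [← add_mul, ← hu]
    _ = u a * (g b - g a) + ∫ t in a..b, ∫ s in a..t, φ s * g' t := by
        rw [intervalIntegral.integral_add ((hg'.intervalIntegrable _ _).const_mul _) hprimitive,
          intervalIntegral.integral_const_mul, hg'_int]
        simp only [intervalIntegral.integral_mul_const]
    _ = u a * (g b - g a) + ∫ s in a..b, ∫ t in s..b, φ s * g' t := by
        rw [intervalIntegral_triangle_swap hab hprod]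
    _ = u a * (g b - g a) + ∫ s in a..b, (φ s * g b - φ s * g s) := by simp [hg'_int, mul_sub]
    _ = u b * g b - u a * g a - ∫ t in a..b, φ t * g t := by
        rw [intervalIntegral.integral_sub (hφ.mul_const _)
          (hφ.mul_continuousOn hgc.continuousOn), intervalIntegral.integral_mul_const, hu b]
        ring

theorem exists_pos_forall_le_norm_circleMap_sub {c z : ℂ} {R : ℝ} (hz : z ∈ ball c R) :
    ∃ δ > 0, ball z δ ⊆ ball c R ∧ ∀ w ∈ ball z δ, ∀ t, δ ≤ ‖circleMap c R t - w‖ := by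
  obtain ⟨ε, hε, hball⟩ := Metric.isOpen_iff.1 isOpen_ball z hz
  refine ⟨ε / 2, half_pos hε, (ball_subset_ball (half_le_self hε.le)).trans hball,
    fun w hw t ↦ ?_⟩
  by_contra! hlt
  refine circleMap_ne_mem_ball (hball ?_) t rfl
  rw [mem_ball_iff_norm] at hw ⊢
  linarith [norm_sub_le_norm_sub_add_norm_sub (circleMap c R t) w z]

theorem hasDerivAt_circleIntegral_sub_inv_smul {E : Type*} [NormedAddCommGroup E]
    [NormedSpace ℂ E] {f : ℂ → E} {c z : ℂ} {R : ℝ} (hf : CircleIntegrable f c R)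
    (hz : z ∈ ball c R) :
    HasDerivAt (fun w ↦ ∮ ζ in C(c, R), (ζ - w)⁻¹ • f ζ)
      (∮ ζ in C(c, R), ((ζ - z) ^ 2)⁻¹ • f ζ) z := by
  obtain ⟨δ, hδ, hsub, hδ_le⟩ := exists_pos_forall_le_norm_circleMap_sub hz
  have hkernel {w : ℂ} (hw : w ∈ ball c R) : Continuous fun t ↦ (circleMap c R t - w)⁻¹ :=
    continuous_circleMap_inv hw
  have hderiv : Continuous (deriv (circleMap c R)) := by
    simp only [funext (deriv_circleMap c R)]
    fun_prop
  have hf_meas := hf.def'.aestronglyMeasurable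
  have hf_int : IntervalIntegrable (fun t ↦ f (circleMap c R t)) volume 0 (2 * π) := hf
  refine (intervalIntegral.hasDerivAt_integral_of_dominated_loc_of_deriv_le (μ := volume)
    (F := fun w t ↦ deriv (circleMap c R) t • (circleMap c R t - w)⁻¹ • f (circleMap c R t))
    (F' := fun w t ↦ deriv (circleMap c R) t • ((circleMap c R t - w) ^ 2)⁻¹ • f (circleMap c R t))
    (bound := fun t ↦ |R| * ((δ ^ 2)⁻¹ * ‖f (circleMap c R t)‖))
    (ball_mem_nhds z hδ) ?_ ?_ ?_ ?_ ?_ ?_).2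
  · filter_upwards [ball_mem_nhds z hδ] with w hw
    exact hderiv.aestronglyMeasurable.smul
      ((hkernel (hsub hw)).aestronglyMeasurable.smul hf_meas)
  · exact (hf_int.continuousOn_smul (hkernel hz).continuousOn).continuousOn_smul
      hderiv.continuousOn
  · simp only [← inv_pow]
    exact hderiv.aestronglyMeasurable.smul
      (((hkernel hz).pow 2).aestronglyMeasurable.smul hf_meas)
  · refine .of_forall fun t _ w hw ↦ ?_
    have := hδ_le w hw t
    rw [norm_smul, norm_smul, norm_inv, norm_pow, deriv_circleMap, norm_mul, norm_circleMap_zero,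
      norm_I, mul_one]
    gcongr
  · exact hf_int.norm.const_mul _ |>.const_mul _
  · refine .of_forall fun t _ w hw ↦ ?_
    have hne := sub_ne_zero.2 (circleMap_ne_mem_ball (hsub hw) t)
    have hinv : HasDerivAt (fun w ↦ (circleMap c R t - w)⁻¹) ((circleMap c R t - w) ^ 2)⁻¹ w := by
      simpa using! ((hasDerivAt_id w).const_sub (circleMap c R t)).inv hne
    exact (hinv.smul_const _).const_smul _

/-- The Cauchy integral of `F` over the unit circle, through which the Wirtinger derivatives of
`poissonInt F` become complex derivatives. As for `poissonInt`, the function `F` is defined on all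
of `ℂ` but only its values on the circle matter. -/
def cauchyIntegral (F : ℂ → ℂ) (z : ℂ) : ℂ :=
  (2 * π * I)⁻¹ * ∮ ζ in C(0, 1), (ζ - z)⁻¹ * F ζ

namespace IsACDeriv

variable {F : ℂ → ℂ} {Fd : ℝ → ℂ}

theorem apply_circleMap (hF : IsACDeriv F Fd) (t : ℝ) :
    F (circleMap 0 1 t) = F (circleMap 0 1 0) + ∫ s in (0:ℝ)..t, Fd s := by
  simpa [circleMap] using hF.2.2 t

theorem circleIntegrable (hF : IsACDeriv F Fd) : CircleIntegrable F 0 1 := by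
  have hcont : Continuous fun t ↦ F (circleMap 0 1 t) := by
    rw [funext hF.apply_circleMap]
    exact continuous_const.add (intervalIntegral.continuous_primitive hF.1 0)
  exact hcont.intervalIntegrable _ _

theorem conj (hF : IsACDeriv F Fd) :
    IsACDeriv (fun ζ ↦ starRingEnd ℂ (F ζ)) (fun t ↦ starRingEnd ℂ (Fd t)) := by
  have hconj {a b : ℝ} (h : IntegrableOn Fd (Ioc a b) volume) :
      IntegrableOn (fun t ↦ starRingEnd ℂ (Fd t)) (Ioc a b) volume :=
    Complex.conjCLE.toContinuousLinearMap.integrable_comp h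
  refine ⟨fun a b ↦ (hF.1 a b).imp hconj hconj, fun t ↦ congrArg _ (hF.2.1 t), fun t ↦ ?_⟩
  simp only [hF.2.2 t, map_add, intervalIntegral.intervalIntegral_conj]

theorem circleIntegral_inv_sq_mul (hF : IsACDeriv F Fd) {z : ℂ} (hz : ‖z‖ < 1) :
    ∮ ζ in C(0, 1), ((ζ - z) ^ 2)⁻¹ * F ζ =
      ∫ t in (0:ℝ)..(2 * π), Fd t * (circleMap 0 1 t - z)⁻¹ := by
  have hinv := continuous_inv_circleMap_sub hz
  have hderiv (t : ℝ) : HasDerivAt (fun t ↦ -(circleMap 0 1 t - z)⁻¹)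
      (circleMap 0 1 t * I * ((circleMap 0 1 t - z) ^ 2)⁻¹) t := by
    simpa [div_eq_mul_inv] using!
      (((hasDerivAt_circleMap 0 1 t).sub_const z).inv (circleMap_sub_ne_zero hz t)).neg
  have hcont : Continuous fun t ↦ circleMap 0 1 t * I * ((circleMap 0 1 t - z) ^ 2)⁻¹ := by
    simp only [← inv_pow]
    exact ((continuous_circleMap 0 1).mul continuous_const).mul (hinv.pow 2)
  have hclosed : circleMap (0 : ℂ) 1 (2 * π) = circleMap 0 1 0 := by
    simpa using periodic_circleMap 0 1 0
  have hparts := integral_mul_deriv_of_eq_primitive Real.two_pi_pos.le (hF.1 0 (2 * π))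
    hF.apply_circleMap hderiv hcont
  rw [hclosed, sub_self, zero_sub] at hparts
  simp only [mul_neg, intervalIntegral.integral_neg, neg_neg] at hparts
  rw [← hparts, circleIntegral]
  simp only [deriv_circleMap, smul_eq_mul]
  refine intervalIntegral.integral_congr fun t _ ↦ ?_
  ring

theorem hasDerivAt_cauchyIntegral (hF : IsACDeriv F Fd) {z : ℂ} (hz : ‖z‖ < 1) :
    HasDerivAt (cauchyIntegral F)
      ((2 * π * I)⁻¹ * ∫ t in (0:ℝ)..(2 * π), Fd t * (circleMap 0 1 t - z)⁻¹) z := by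
  rw [← hF.circleIntegral_inv_sq_mul hz]
  exact (hasDerivAt_circleIntegral_sub_inv_smul hF.circleIntegrable
    (by simpa using hz)).const_mul _

theorem norm_deriv_cauchyIntegral_le {p q : ℝ} (hpq : p.HolderConjugate q) (hF : IsACDeriv F Fd)
    (hFd : MemLpT (ENNReal.ofReal p) Fd) {z : ℂ} (hz : ‖z‖ < 1) :
    ‖deriv (cauchyIntegral F) z‖ ≤
      (Real.Gamma (q - 1) / Real.Gamma (q / 2) ^ 2) ^ (1 / q) * lpNormT p Fd /
        (1 - ‖z‖ ^ 2) ^ (1 / p) := by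
  have hkernel := memLpT_of_continuous (ENNReal.ofReal q) (continuous_inv_circleMap_sub hz)
  have hFd_nonneg := lpNormT_nonneg p Fd
  calc ‖deriv (cauchyIntegral F) z‖
      = ‖(1 / (2 * π) : ℂ) * ∫ t in (0:ℝ)..(2 * π), Fd t * (circleMap 0 1 t - z)⁻¹‖ := by
        rw [(hF.hasDerivAt_cauchyIntegral hz).deriv]
        simp
    _ ≤ lpNormT p Fd * lpNormT q fun t ↦ (circleMap 0 1 t - z)⁻¹ :=
        norm_integral_mul_le_lpNormT_mul_lpNormT hpq hFd hkernel
    _ ≤ lpNormT p Fd * ((Real.Gamma (q - 1) / Real.Gamma (q / 2) ^ 2) ^ (1 / q) /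
          (1 - ‖z‖ ^ 2) ^ (1 / p)) := by
        gcongr
        exact lpNormT_inv_circleMap_sub_le hpq hz
    _ = _ := by ring

end IsACDeriv

theorem poissonKer_eq_inv_add_conj_inv {w : ℂ} (hw : ‖w‖ < 1) :
    (poissonKer w : ℂ) = (1 - w)⁻¹ + starRingEnd ℂ (1 - w)⁻¹ - 1 := by
  have hne := (isUnit_one_sub_of_norm_lt_one hw).ne_zero
  have hne_conj : 1 - starRingEnd ℂ w ≠ 0 :=
    (isUnit_one_sub_of_norm_lt_one (by simpa)).ne_zero
  rw [poissonKer]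
  push_cast
  rw [← Complex.mul_conj', ← Complex.mul_conj']
  simp only [map_inv₀, map_sub, map_one]
  field_simp
  ring

theorem poissonKer_mul_exp_neg {z : ℂ} (hz : ‖z‖ < 1) (t : ℝ) :
    (poissonKer (z * Complex.exp (-(t : ℂ) * I)) : ℂ) =
      circleMap 0 1 t * (circleMap 0 1 t - z)⁻¹ +
        starRingEnd ℂ (circleMap 0 1 t * (circleMap 0 1 t - z)⁻¹) - 1 := by
  have hexp : Complex.exp (-(t : ℂ) * I) = (circleMap 0 1 t)⁻¹ := by
    simp [circleMap, ← Complex.exp_neg]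
  have hζ : circleMap (0 : ℂ) 1 t ≠ 0 := circleMap_ne_center one_ne_zero
  have hw : ‖z * (circleMap 0 1 t)⁻¹‖ < 1 := by simpa [norm_circleMap_zero] using hz
  have hkernel : (1 - z * (circleMap 0 1 t)⁻¹)⁻¹ =
      circleMap 0 1 t * (circleMap 0 1 t - z)⁻¹ := by
    rw [← div_eq_mul_inv, one_sub_div hζ, inv_div, div_eq_mul_inv]
  rw [hexp, poissonKer_eq_inv_add_conj_inv hw, hkernel]

theorem cauchyIntegral_eq_integral (F : ℂ → ℂ) (z : ℂ) :
    cauchyIntegral F z = (1 / (2 * π)) * ∫ t in (0:ℝ)..(2 * π),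
      circleMap 0 1 t * (circleMap 0 1 t - z)⁻¹ * F (circleMap 0 1 t) := by
  have hpull : ∮ ζ in C(0, 1), (ζ - z)⁻¹ * F ζ = I * ∫ t in (0:ℝ)..(2 * π),
      circleMap 0 1 t * (circleMap 0 1 t - z)⁻¹ * F (circleMap 0 1 t) := by
    rw [circleIntegral, ← intervalIntegral.integral_const_mul]
    simp only [deriv_circleMap, smul_eq_mul]
    refine intervalIntegral.integral_congr fun t _ ↦ ?_
    ring
  rw [cauchyIntegral, hpull]
  field_simp [I_ne_zero]

theorem poissonInt_eq_cauchyIntegral_add_conj {F : ℂ → ℂ} (hF : CircleIntegrable F 0 1) {z : ℂ}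
    (hz : ‖z‖ < 1) :
    poissonInt F z = cauchyIntegral F z +
      starRingEnd ℂ (cauchyIntegral (fun ζ ↦ starRingEnd ℂ (F ζ)) z) -
        Real.circleAverage F 0 1 := by
  have hF_int : IntervalIntegrable (fun t ↦ F (circleMap 0 1 t)) volume 0 (2 * π) := hF
  have hkernel : Continuous fun t ↦ circleMap 0 1 t * (circleMap 0 1 t - z)⁻¹ :=
    (continuous_circleMap 0 1).mul (continuous_inv_circleMap_sub hz)
  have hconj : starRingEnd ℂ (cauchyIntegral (fun ζ ↦ starRingEnd ℂ (F ζ)) z) =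
      (1 / (2 * π)) * ∫ t in (0:ℝ)..(2 * π),
        starRingEnd ℂ (circleMap 0 1 t * (circleMap 0 1 t - z)⁻¹) * F (circleMap 0 1 t) := by
    simp [cauchyIntegral_eq_integral, ← intervalIntegral.intervalIntegral_conj, map_ofNat]
  have hintegrand (t : ℝ) :
      (poissonKer (z * Complex.exp (-(t : ℂ) * I)) : ℂ) * F (Complex.exp (t * I)) =
        circleMap 0 1 t * (circleMap 0 1 t - z)⁻¹ * F (circleMap 0 1 t) +
          starRingEnd ℂ (circleMap 0 1 t * (circleMap 0 1 t - z)⁻¹) * F (circleMap 0 1 t) -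
            F (circleMap 0 1 t) := by
    rw [poissonKer_mul_exp_neg hz, show Complex.exp (t * I) = circleMap 0 1 t by simp [circleMap]]
    ring
  have hint₁ := hF_int.continuousOn_mul hkernel.continuousOn
  have hint₂ := hF_int.continuousOn_mul (Complex.continuous_conj.comp hkernel).continuousOn
  simp only [Function.comp_apply] at hint₂
  rw [poissonInt, hconj, cauchyIntegral_eq_integral, Real.circleAverage_def]
  simp only [hintegrand]
  rw [intervalIntegral.integral_sub (hint₁.add hint₂) hF_int,
    intervalIntegral.integral_add hint₁ hint₂, Complex.real_smul]
  push_cast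
  ring

theorem fderiv_add_conj_apply {g h : ℂ → ℂ} {z : ℂ} (hg : DifferentiableAt ℂ g z)
    (hh : DifferentiableAt ℂ h z) (v : ℂ) :
    fderiv ℝ (fun w ↦ g w + starRingEnd ℂ (h w)) z v =
      v * deriv g z + starRingEnd ℂ (v * deriv h z) := by
  have hderiv := (hg.hasDerivAt.hasFDerivAt.restrictScalars ℝ).add
    (Complex.conjCLE.toContinuousLinearMap.hasFDerivAt.comp z
      (hh.hasDerivAt.hasFDerivAt.restrictScalars ℝ))
  exact DFunLike.congr_fun hderiv.fderiv v

theorem wdz_eq_deriv {f g h : ℂ → ℂ} {z : ℂ} (hg : DifferentiableAt ℂ g z)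
    (hh : DifferentiableAt ℂ h z) (hf : f =ᶠ[𝓝 z] fun w ↦ g w + starRingEnd ℂ (h w)) :
    wdz f z = deriv g z := by
  rw [wdz, hf.fderiv_eq, fderiv_add_conj_apply hg hh, fderiv_add_conj_apply hg hh, map_mul,
    map_mul, map_one, conj_I]
  linear_combination (-1 / 2) * (deriv g z - starRingEnd ℂ (deriv h z)) * I_mul_I

theorem wdzb_eq_conj_deriv {f g h : ℂ → ℂ} {z : ℂ} (hg : DifferentiableAt ℂ g z)
    (hh : DifferentiableAt ℂ h z) (hf : f =ᶠ[𝓝 z] fun w ↦ g w + starRingEnd ℂ (h w)) :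
    wdzb f z = starRingEnd ℂ (deriv h z) := by
  rw [wdzb, hf.fderiv_eq, fderiv_add_conj_apply hg hh, fderiv_add_conj_apply hg hh, map_mul,
    map_mul, map_one, conj_I]
  linear_combination (1 / 2) * (deriv g z - starRingEnd ℂ (deriv h z)) * I_mul_I

theorem poissonInt_eventuallyEq_cauchyIntegral_add_conj {F : ℂ → ℂ}
    (hF : CircleIntegrable F 0 1) {z : ℂ} (hz : z ∈ ball 0 1) :
    poissonInt F =ᶠ[𝓝 z] fun w ↦ cauchyIntegral F w - Real.circleAverage F 0 1 +
      starRingEnd ℂ (cauchyIntegral (fun ζ ↦ starRingEnd ℂ (F ζ)) w) := by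
  filter_upwards [isOpen_ball.mem_nhds hz] with w hw
  rw [poissonInt_eq_cauchyIntegral_add_conj hF (mem_ball_zero_iff.1 hw), sub_add_eq_add_sub]

theorem IsACDeriv.wdz_poissonInt {F : ℂ → ℂ} {Fd : ℝ → ℂ} (hF : IsACDeriv F Fd) {z : ℂ}
    (hz : ‖z‖ < 1) : wdz (poissonInt F) z = deriv (cauchyIntegral F) z := by
  rw [wdz_eq_deriv ((hF.hasDerivAt_cauchyIntegral hz).differentiableAt.sub_const _)
    (hF.conj.hasDerivAt_cauchyIntegral hz).differentiableAt
    (poissonInt_eventuallyEq_cauchyIntegral_add_conj hF.circleIntegrable (mem_ball_zero_iff.2 hz)),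
    deriv_sub_const]

theorem IsACDeriv.wdzb_poissonInt {F : ℂ → ℂ} {Fd : ℝ → ℂ} (hF : IsACDeriv F Fd) {z : ℂ}
    (hz : ‖z‖ < 1) : wdzb (poissonInt F) z =
      starRingEnd ℂ (deriv (cauchyIntegral fun ζ ↦ starRingEnd ℂ (F ζ)) z) :=
  wdzb_eq_conj_deriv ((hF.hasDerivAt_cauchyIntegral hz).differentiableAt.sub_const _)
    (hF.conj.hasDerivAt_cauchyIntegral hz).differentiableAt
    (poissonInt_eventuallyEq_cauchyIntegral_add_conj hF.circleIntegrable (mem_ball_zero_iff.2 hz))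

/-- For `p ∈ (1,∞)` with conjugate exponent `q = p/(p-1)`, `F : 𝕋 → ℂ`
absolutely continuous with `Ḟ ∈ L^p(𝕋)` and `f = P[F]`, for every `z ∈ 𝔻`,
`max(|f_z(z)|, |f_z̄(z)|) ≤ C_p ‖Ḟ‖_p / (1-|z|²)^{1/p}` and
`|f_z(z)| + |f_z̄(z)| ≤ 2 C_p ‖Ḟ‖_p / (1-|z|²)^{1/p}`, where
`C_p = (Γ(q-1)/Γ(q/2)²)^{1/q}`. -/
theorem stmt16 (p q : ℝ) (hp : 1 < p) (hq : q = p / (p - 1)) (F : ℂ → ℂ) (Fd : ℝ → ℂ)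
    (hF : IsACDeriv F Fd) (hLp : MemLpT (ENNReal.ofReal p) Fd) :
    ∀ z ∈ ball (0:ℂ) 1,
      (max ‖wdz (poissonInt F) z‖ ‖wdzb (poissonInt F) z‖
          ≤ (Real.Gamma (q - 1) / Real.Gamma (q / 2) ^ 2) ^ (1 / q) * lpNormT p Fd /
              (1 - ‖z‖ ^ 2) ^ (1 / p)) ∧
      (‖wdz (poissonInt F) z‖ + ‖wdzb (poissonInt F) z‖
          ≤ 2 * (Real.Gamma (q - 1) / Real.Gamma (q / 2) ^ 2) ^ (1 / q) * lpNormT p Fd /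
              (1 - ‖z‖ ^ 2) ^ (1 / p)) := by
  intro z hz
  have hz : ‖z‖ < 1 := mem_ball_zero_iff.1 hz
  have hpq : p.HolderConjugate q := hq ▸ Real.HolderConjugate.conjExponent hp
  have hwdz := hF.norm_deriv_cauchyIntegral_le hpq hLp hz
  have hwdzb := hF.conj.norm_deriv_cauchyIntegral_le hpq (memLpT_conj hLp) hz
  rw [← hF.wdz_poissonInt hz] at hwdz
  rw [lpNormT_conj, ← Complex.norm_conj, ← hF.wdzb_poissonInt hz] at hwdzb
  exact ⟨max_le hwdz hwdzb, (add_le_add hwdz hwdzb).trans_eq (by ring)⟩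

end
end

section
/- Let p ∈ (1, ∞) with conjugate exponent q = p/(p−1), let F : 𝕋 → ℂ be absolutely continuous with Ḟ ∈ L^p(𝕋), and let f = P[F] be its Poisson integral. Then f is (1/q)-Hölder continuous on 𝔻, i.e., there exists L > 0 such that |f(z) − f(w)| ≤ L |z − w|^{1/q} for all z, w ∈ 𝔻. -/
open MeasureTheory Complex Metric Set Filter
open scoped Real Topology ENNReal

noncomputable section

/-! By Hölder's inequality, `‖F (e^{ib}) - F (e^{ia})‖ ≤ ‖Ḟ‖_p |b - a|^{1/q}`, and chord and arc
length on the circle are comparable, so `F` is `1/q`-Hölder on the circle. Set `δ = ‖z - w‖` and let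
`ζ₀` be the radial projection of `z` to the circle, so that `‖ζ - ζ₀‖ ≤ 2 ‖ζ - z‖` for `‖ζ‖ = 1`.
The kernels `P_z` and `P_w` both have mean `1`, so `f z - f w` is the mean of
`(P_z - P_w) (F - F ζ₀)`. Where `‖ζ - ζ₀‖ ≤ 4δ` the increment of `F` is `O(δ^{1/q})` and
`|P_z - P_w| ≤ P_z + P_w`, which has mean `2`. Elsewhere
`|P_z - P_w| ≤ 2δ / (‖ζ - z‖ ‖ζ - w‖) ≤ 16δ / ‖ζ - ζ₀‖²`, and the mean of
`δ ‖ζ - ζ₀‖^{1/q - 2}` over `‖ζ - ζ₀‖ > 4δ` is `O(δ^{1/q})` because `1/q < 1`. -/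

open scoped NNReal
open InnerProductGeometry (angle)
open Real (circleAverage)

section PeriodicPrimitive

variable {E : Type*} [NormedAddCommGroup E] {f : ℝ → E} {T : ℝ} {p : ℝ≥0∞}

theorem eLpNorm_restrict_Ioc_add_of_periodic (hT : 0 < T) (hf : Function.Periodic f T)
    (p : ℝ≥0∞) (a b : ℝ) :
    eLpNorm f p (volume.restrict (Ioc a (a + T))) =
      eLpNorm f p (volume.restrict (Ioc b (b + T))) := by
  have hinv (g : AddSubgroup.zmultiples T) (x : ℝ) : f (g +ᵥ x) = f x := by
    obtain ⟨-, n, rfl⟩ := g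
    simpa [AddSubgroup.vadd_def, add_comm] using hf.int_mul n x
  have ha := isAddFundamentalDomain_Ioc hT a
  have hb := isAddFundamentalDomain_Ioc hT b
  obtain rfl | rfl | hp := p.trichotomy
  · simp only [eLpNorm_exponent_zero]
  · simp only [eLpNorm_exponent_top, eLpNormEssSup_eq_essSup_enorm]
    rw [ha.essSup_measure_restrict fun g x ↦ by rw [hinv],
      hb.essSup_measure_restrict fun g x ↦ by rw [hinv]]
  · obtain ⟨hp0, hp_top⟩ := ENNReal.toReal_pos_iff.1 hp
    rw [eLpNorm_eq_lintegral_rpow_enorm_toReal hp0.ne' hp_top.ne,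
      eLpNorm_eq_lintegral_rpow_enorm_toReal hp0.ne' hp_top.ne,
      ha.setLIntegral_eq hb _ fun g x ↦ by rw [hinv]]

variable [NormedSpace ℝ E]

theorem enorm_integral_le_eLpNorm_mul_measure_univ_rpow {α : Type*} [MeasurableSpace α]
    (μ : Measure α) (f : α → E) (hp : 1 ≤ p) :
    ‖∫ x, f x ∂μ‖ₑ ≤ eLpNorm f p μ * μ univ ^ (1 - 1 / p.toReal) := by
  by_cases hf : AEStronglyMeasurable f μ
  · calc ‖∫ x, f x ∂μ‖ₑ
        ≤ eLpNorm f 1 μ := by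
          rw [eLpNorm_one_eq_lintegral_enorm]
          exact enorm_integral_le_lintegral_enorm f
      _ ≤ eLpNorm f p μ * μ univ ^ (1 - 1 / p.toReal) := by
          simpa only [ENNReal.toReal_one, div_one] using
            eLpNorm_le_eLpNorm_mul_rpow_measure_univ hp hf
  · simp only [integral_non_aestronglyMeasurable hf, enorm_zero, zero_le]

theorem enorm_intervalIntegral_le_of_periodic (hT : 0 < T) (hf : Function.Periodic f T)
    (hp : 1 ≤ p) {a b : ℝ} (hab : |b - a| ≤ T) :
    ‖∫ x in a..b, f x‖ₑ ≤
      eLpNorm f p (volume.restrict (Ioc 0 T)) * ‖b - a‖ₑ ^ (1 - 1 / p.toReal) := by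
  wlog h : a ≤ b generalizing a b
  · rw [intervalIntegral.integral_symm, enorm_neg, ← enorm_neg (b - a), neg_sub]
    exact this (by rwa [abs_sub_comm]) (le_of_not_ge h)
  have hsub : Ioc a b ⊆ Ioc a (a + T) :=
    Ioc_subset_Ioc_right (by linarith [(le_abs_self _).trans hab])
  calc ‖∫ x in a..b, f x‖ₑ
      ≤ eLpNorm f p (volume.restrict (Ioc a b)) * ‖b - a‖ₑ ^ (1 - 1 / p.toReal) := by
        rw [intervalIntegral.integral_of_le h, Real.enorm_of_nonneg (sub_nonneg.2 h)]
        simpa only [Measure.restrict_apply_univ, Real.volume_Ioc] using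
          enorm_integral_le_eLpNorm_mul_measure_univ_rpow (volume.restrict (Ioc a b)) f hp
    _ ≤ eLpNorm f p (volume.restrict (Ioc 0 T)) * ‖b - a‖ₑ ^ (1 - 1 / p.toReal) := by
        gcongr ?_ * _
        calc eLpNorm f p (volume.restrict (Ioc a b))
            ≤ eLpNorm f p (volume.restrict (Ioc a (a + T))) :=
              eLpNorm_mono_measure f (Measure.restrict_mono_set volume hsub)
          _ = eLpNorm f p (volume.restrict (Ioc 0 T)) := by
              rw [eLpNorm_restrict_Ioc_add_of_periodic hT hf p a 0, zero_add]

end PeriodicPrimitive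

section CircleGeometry

theorem exists_circleMap_eq_abs_sub_eq_angle {x y : ℂ} (hx : ‖x‖ = 1) (hy : ‖y‖ = 1) :
    ∃ a b : ℝ, circleMap 0 1 a = x ∧ circleMap 0 1 b = y ∧ |a - b| = angle x y := by
  have hx0 : x ≠ 0 := norm_ne_zero_iff.1 (hx.trans_ne one_ne_zero)
  have hy0 : y ≠ 0 := norm_ne_zero_iff.1 (hy.trans_ne one_ne_zero)
  have exp_arg {u : ℂ} (hu : ‖u‖ = 1) : cexp (u.arg * I) = u := by
    simpa only [hu, ofReal_one, one_mul] using norm_mul_exp_arg_mul_I u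
  refine ⟨y.arg + (x / y).arg, y.arg, ?_, ?_, ?_⟩
  · rw [circleMap_zero, ofReal_add, add_mul, exp_add, exp_arg hy,
      exp_arg (by rw [norm_div, hx, hy, div_one]), ofReal_one, one_mul, mul_div_cancel₀ _ hy0]
  · rw [circleMap_zero, exp_arg hy, ofReal_one, one_mul]
  · rw [add_sub_cancel_left, angle_eq_abs_arg hx0 hy0]

theorem mul_abs_le_norm_circleMap_add_sub {s : ℝ} (hs : s ∈ Ioc (-π) π) (η : ℝ) :
    2 / π * |s| ≤ ‖circleMap 0 1 (s + η) - circleMap 0 1 η‖ := by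
  have hangle : angle (circleMap 0 1 (s + η)) (circleMap 0 1 η) = |s| := by
    have hmod : toIocMod Real.two_pi_pos (-π) s = s :=
      (toIocMod_eq_self Real.two_pi_pos).2 (by rwa [show -π + 2 * π = π by ring])
    simp only [circleMap_zero, ofReal_one, one_mul, angle_exp_exp, add_sub_cancel_right, hmod]
  rw [← hangle]
  exact mul_angle_le_norm_sub (by simp) (by simp)

theorem exists_mem_sphere_forall_norm_sub_le {V : Type*} [NormedAddCommGroup V] [NormedSpace ℝ V]
    [Nontrivial V] (z : V) :
    ∃ ζ₀ ∈ sphere (0 : V) 1, ∀ ζ ∈ sphere (0 : V) 1, ‖ζ - ζ₀‖ ≤ 2 * ‖ζ - z‖ := by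
  obtain ⟨ζ₀, hζ₀, hz⟩ : ∃ ζ₀ : V, ‖ζ₀‖ = 1 ∧ ‖z‖ • ζ₀ = z := by
    obtain rfl | hz := eq_or_ne z 0
    · obtain ⟨ζ₀, hζ₀⟩ := exists_norm_eq V zero_le_one
      exact ⟨ζ₀, hζ₀, by rw [norm_zero, zero_smul]⟩
    · exact ⟨NormedSpace.normalize z, NormedSpace.norm_normalize hz,
        NormedSpace.norm_smul_normalize z⟩
  refine ⟨ζ₀, mem_sphere_zero_iff_norm.2 hζ₀, fun ζ hζ ↦ ?_⟩
  have hradial : ‖z - ζ₀‖ ≤ ‖ζ - z‖ :=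
    calc ‖z - ζ₀‖ = ‖(‖z‖ - 1) • ζ₀‖ := by rw [sub_smul, hz, one_smul]
      _ = |‖ζ‖ - ‖z‖| := by
          rw [norm_smul, hζ₀, mul_one, Real.norm_eq_abs, mem_sphere_zero_iff_norm.1 hζ,
            abs_sub_comm]
      _ ≤ ‖ζ - z‖ := abs_norm_sub_norm_le ζ z
  linarith [norm_sub_le_norm_sub_add_norm_sub ζ z ζ₀]

end CircleGeometry

namespace IsACDeriv

variable {F : ℂ → ℂ} {Fd : ℝ → ℂ}

theorem sub_eq_intervalIntegral (hF : IsACDeriv F Fd) (a b : ℝ) :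
    F (circleMap 0 1 b) - F (circleMap 0 1 a) = ∫ t in a..b, Fd t := by
  obtain ⟨hintegrable, -, hprim⟩ := hF
  simp only [circleMap_zero, ofReal_one, one_mul]
  rw [hprim, hprim, add_sub_add_left_eq_sub,
    intervalIntegral.integral_interval_sub_left (hintegrable 0 b) (hintegrable 0 a)]

theorem exists_holderOnWith_sphere (hF : IsACDeriv F Fd) {p : ℝ≥0∞} (hp : 1 ≤ p)
    (hFd : MemLpT p Fd) {r : ℝ≥0} (hr : (r : ℝ) = 1 - 1 / p.toReal) :
    ∃ C : ℝ≥0, HolderOnWith C r F (sphere 0 1) := by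
  set N := eLpNorm Fd p (volume.restrict (Ioc 0 (2 * π)))
  have hN : (N.toNNReal : ℝ≥0∞) = N := ENNReal.coe_toNNReal hFd.eLpNorm_ne_top
  refine ⟨N.toNNReal * (NNReal.pi / 2) ^ (r : ℝ), fun x hx y hy ↦ ?_⟩
  rw [mem_sphere_zero_iff_norm] at hx hy
  obtain ⟨b, a, rfl, rfl, hab⟩ := exists_circleMap_eq_abs_sub_eq_angle hx hy
  have hab_le : |b - a| ≤ 2 * π := by
    linarith [InnerProductGeometry.angle_le_pi (circleMap 0 1 b) (circleMap 0 1 a), Real.pi_pos]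
  have hchord : ‖b - a‖ₑ ≤ (NNReal.pi / 2 : ℝ≥0) * edist (circleMap 0 1 b) (circleMap 0 1 a) := by
    rw [edist_nndist, ← ENNReal.coe_mul, enorm_eq_nnnorm, ENNReal.coe_le_coe, ← NNReal.coe_le_coe,
      NNReal.coe_mul, coe_nndist, dist_eq_norm, coe_nnnorm, Real.norm_eq_abs, hab]
    simpa using angle_le_mul_norm_sub hx hy
  calc edist (F (circleMap 0 1 b)) (F (circleMap 0 1 a))
      = ‖∫ t in a..b, Fd t‖ₑ := by rw [edist_eq_enorm_sub, hF.sub_eq_intervalIntegral]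
    _ ≤ N * ‖b - a‖ₑ ^ (r : ℝ) := by
        rw [hr]
        exact enorm_intervalIntegral_le_of_periodic Real.two_pi_pos hF.2.1 hp hab_le
    _ ≤ N * ((NNReal.pi / 2 : ℝ≥0) * edist (circleMap 0 1 b) (circleMap 0 1 a)) ^ (r : ℝ) := by
        gcongr
    _ = _ := by
        rw [ENNReal.mul_rpow_of_nonneg _ _ r.coe_nonneg, ← mul_assoc, ENNReal.coe_mul, hN,
          ENNReal.coe_rpow_of_nonneg _ r.coe_nonneg]

end IsACDeriv

section RpowIntegral

variable {k δ β R : ℝ}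

theorem integral_mul_add_rpow_neg_le (hk : 0 < k) (hδ : 0 < δ) (hβ : 1 < β) (hR : 0 ≤ R) :
    ∫ s in (0 : ℝ)..R, (k * s + δ) ^ (-β) ≤ δ ^ (1 - β) / (k * (β - 1)) := by
  have hδR : δ ≤ k * R + δ := le_add_of_nonneg_left (by positivity)
  have h0 : (0 : ℝ) ∉ uIcc δ (k * R + δ) := by
    rw [uIcc_of_le hδR]
    exact fun h ↦ hδ.not_ge h.1
  have hpos : 0 ≤ (k * R + δ) ^ (1 - β) := by positivity
  have hβ' : 0 < β - 1 := sub_pos.2 hβ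
  calc ∫ s in (0 : ℝ)..R, (k * s + δ) ^ (-β)
      = k⁻¹ * (((k * R + δ) ^ (1 - β) - δ ^ (1 - β)) / (1 - β)) := by
        rw [intervalIntegral.integral_comp_mul_add (fun x ↦ x ^ (-β)) hk.ne', mul_zero, zero_add,
          integral_rpow (.inr ⟨by linarith, h0⟩), neg_add_eq_sub, smul_eq_mul]
    _ = (δ ^ (1 - β) - (k * R + δ) ^ (1 - β)) / (k * (β - 1)) := by
        rw [← neg_sub β 1]
        field_simp
        ring
    _ ≤ δ ^ (1 - β) / (k * (β - 1)) := by
        gcongr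
        exact sub_le_self _ hpos

theorem integral_mul_abs_add_rpow_neg_le (hk : 0 < k) (hδ : 0 < δ) (hβ : 1 < β) (hR : 0 ≤ R) :
    ∫ s in (-R)..R, (k * |s| + δ) ^ (-β) ≤ 2 * (δ ^ (1 - β) / (k * (β - 1))) := by
  have hintegrable (a b : ℝ) :
      IntervalIntegrable (fun s ↦ (k * |s| + δ) ^ (-β)) volume a b := by
    refine Continuous.intervalIntegrable (.rpow_const (by fun_prop) fun s ↦ .inl ?_) a b
    positivity
  have hneg : ∫ s in (-R)..0, (k * |s| + δ) ^ (-β) = ∫ s in (0 : ℝ)..R, (k * |s| + δ) ^ (-β) := by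
    simpa only [abs_neg, neg_neg, neg_zero] using
      intervalIntegral.integral_comp_neg (a := -R) (b := 0) fun s ↦ (k * |-s| + δ) ^ (-β)
  have hright : ∫ s in (0 : ℝ)..R, (k * |s| + δ) ^ (-β) ≤ δ ^ (1 - β) / (k * (β - 1)) := by
    rw [intervalIntegral.integral_congr (g := fun s ↦ (k * s + δ) ^ (-β)) fun s hs ↦ by
      rw [uIcc_of_le hR] at hs
      simp only [abs_of_nonneg hs.1]]
    exact integral_mul_add_rpow_neg_le hk hδ hβ hR
  rw [← intervalIntegral.integral_add_adjacent_intervals (hintegrable (-R) 0) (hintegrable 0 R),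
    hneg, two_mul]
  exact add_le_add hright hright

end RpowIntegral

section CircleAverage

variable {E : Type*} [NormedAddCommGroup E] [NormedSpace ℝ E] {c : ℂ} {R : ℝ}

theorem norm_circleAverage_le_of_norm_le {f : ℂ → E} {g : ℂ → ℝ} (hg : CircleIntegrable g c R)
    (hfg : ∀ ζ ∈ sphere c |R|, ‖f ζ‖ ≤ g ζ) :
    ‖circleAverage f c R‖ ≤ circleAverage g c R := by
  rw [Real.circleAverage_def, Real.circleAverage_def, norm_smul, smul_eq_mul,
    Real.norm_of_nonneg (inv_nonneg.2 Real.two_pi_pos.le)]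
  gcongr
  exact intervalIntegral.norm_integral_le_of_norm_le Real.two_pi_pos.le
    (.of_forall fun θ _ ↦ hfg _ (circleMap_mem_sphere' c R θ)) hg

theorem circleAverage_eq_integral_neg_pi_pi_add (f : ℂ → E) (c : ℂ) (R η : ℝ) :
    circleAverage f c R = (2 * π)⁻¹ • ∫ s in (-π)..π, f (circleMap c R (s + η)) := by
  have hper : Function.Periodic (fun s ↦ f (circleMap c R (s + η))) (2 * π) :=
    ((periodic_circleMap c R).comp f).add_const η
  rw [Real.circleAverage_eq_integral_add η, ← zero_add (2 * π),
    hper.intervalIntegral_add_eq 0 (-π)]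
  ring_nf

theorem circleAverage_mul_norm_sub_add_rpow_neg_le {k δ β : ℝ} (hk : 0 < k) (hδ : 0 < δ)
    (hβ : 1 < β) {ζ₀ : ℂ} (hζ₀ : ζ₀ ∈ sphere 0 1) :
    circleAverage (fun ζ ↦ (k * ‖ζ - ζ₀‖ + δ) ^ (-β)) 0 1 ≤
      δ ^ (1 - β) / (2 * k * (β - 1)) := by
  obtain ⟨η, rfl⟩ : ζ₀ ∈ range (circleMap 0 1) := by rwa [range_circleMap, abs_one]
  have hle : ∀ s ∈ Ioc (-π) π, (k * ‖circleMap 0 1 (s + η) - circleMap 0 1 η‖ + δ) ^ (-β) ≤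
      (2 * k / π * |s| + δ) ^ (-β) := fun s hs ↦ by
    refine Real.rpow_le_rpow_of_nonpos (by positivity) ?_ (by linarith)
    calc 2 * k / π * |s| + δ = k * (2 / π * |s|) + δ := by ring
      _ ≤ _ := by grw [mul_abs_le_norm_circleMap_add_sub hs η]
  have hβ' : 0 < β - 1 := sub_pos.2 hβ
  calc circleAverage (fun ζ ↦ (k * ‖ζ - circleMap 0 1 η‖ + δ) ^ (-β)) 0 1
      = (2 * π)⁻¹ * ∫ s in (-π)..π,
          (k * ‖circleMap 0 1 (s + η) - circleMap 0 1 η‖ + δ) ^ (-β) := by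
        rw [circleAverage_eq_integral_neg_pi_pi_add _ _ _ η, smul_eq_mul]
    _ ≤ (2 * π)⁻¹ * ∫ s in (-π)..π, (2 * k / π * |s| + δ) ^ (-β) := by
        gcongr
        refine intervalIntegral.integral_mono_on_of_le_Ioo (by linarith [Real.pi_pos]) ?_ ?_
          fun s hs ↦ hle s (Ioo_subset_Ioc_self hs)
        all_goals
          refine Continuous.intervalIntegrable (.rpow_const (by fun_prop) fun s ↦ .inl ?_) _ _
          positivity
    _ ≤ (2 * π)⁻¹ * (2 * (δ ^ (1 - β) / (2 * k / π * (β - 1)))) := by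
        gcongr
        exact integral_mul_abs_add_rpow_neg_le (by positivity) hδ hβ Real.pi_pos.le
    _ = δ ^ (1 - β) / (2 * k * (β - 1)) := by
        field_simp

end CircleAverage

section PoissonKernel

variable {c z w ζ : ℂ} {R : ℝ}

theorem continuousOn_poissonKernel_sphere (hw : w ∈ ball c R) :
    ContinuousOn (poissonKernel c w) (sphere c |R|) := by
  rw [poissonKernel_eq_re_herglotzRieszKernel]
  exact continuous_re.comp_continuousOn (continuousOn_herglotzRieszKernel_sphere hw)

theorem poissonKernel_nonneg (h : ‖w - c‖ ≤ ‖z - c‖) : 0 ≤ poissonKernel c w z := by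
  rw [poissonKernel_def]
  exact div_nonneg (sub_nonneg.2 (by gcongr)) (by positivity)

theorem circleAverage_poissonKernel (hw : w ∈ ball c R) :
    circleAverage (poissonKernel c w) c R = 1 := by
  have hP : CircleIntegrable (poissonKernel c w) c R :=
    (continuousOn_poissonKernel_sphere hw).circleIntegrable'
  have hone := DiffContOnCl.circleAverage_poissonKernel_smul (diffContOnCl_const (c := (1 : ℂ))) hw
  refine ofReal_injective ?_
  rw [ofReal_one, ← hone, ← ofRealCLM_apply, ← ofRealCLM.circleAverage_comp_comm hP]
  congr 1
  ext ζ
  simp only [Function.comp_apply, ofRealCLM_apply, Pi.smul_apply', real_smul, mul_one]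

theorem abs_poissonKernel_sub_le (hz : ζ ≠ z) (hw : ζ ≠ w) :
    |poissonKernel c z ζ - poissonKernel c w ζ| ≤
      2 * ‖ζ - c‖ * ‖z - w‖ / (‖ζ - z‖ * ‖ζ - w‖) := by
  have hz' : ζ - z ≠ 0 := sub_ne_zero.2 hz
  have hw' : ζ - w ≠ 0 := sub_ne_zero.2 hw
  have hdiff : herglotzRieszKernel c z ζ - herglotzRieszKernel c w ζ =
      2 * (ζ - c) * (z - w) / ((ζ - z) * (ζ - w)) := by
    rw [herglotzRieszKernel_def, herglotzRieszKernel_def, sub_sub_sub_cancel_right,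
      sub_sub_sub_cancel_right]
    field_simp
    ring
  calc |poissonKernel c z ζ - poissonKernel c w ζ|
      = |(herglotzRieszKernel c z ζ - herglotzRieszKernel c w ζ).re| := by
        simp only [poissonKernel_eq_re_herglotzRieszKernel, Function.comp_apply, sub_re]
    _ ≤ ‖herglotzRieszKernel c z ζ - herglotzRieszKernel c w ζ‖ := abs_re_le_norm _
    _ = 2 * ‖ζ - c‖ * ‖z - w‖ / (‖ζ - z‖ * ‖ζ - w‖) := by
        rw [hdiff, norm_div, norm_mul, norm_mul, norm_mul, norm_ofNat]

end PoissonKernel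

section PoissonIntegral

variable {z w ζ ζ₀ : ℂ}

theorem poissonInt_eq_circleAverage (F : ℂ → ℂ) (z : ℂ) :
    poissonInt F z = circleAverage (poissonKernel 0 z • F) 0 1 := by
  have hkernel (t : ℝ) :
      poissonKer (z * cexp (-(t : ℂ) * I)) = poissonKernel 0 z (cexp (t * I)) := by
    have hnorm : ‖cexp (-(t : ℂ) * I)‖ = 1 := by
      simpa only [ofReal_neg] using norm_exp_ofReal_mul_I (-t)
    have hrot : 1 - z * cexp (-(t : ℂ) * I) = cexp (-(t : ℂ) * I) * (cexp (t * I) - z) := by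
      rw [mul_sub, ← exp_add, neg_mul, neg_add_cancel, exp_zero, mul_comm z]
    simp only [poissonKer, poissonKernel_def, hrot, norm_mul, hnorm, norm_exp_ofReal_mul_I,
      sub_zero, mul_one, one_mul, one_pow]
  simp only [poissonInt, Real.circleAverage_def, hkernel, circleMap_zero, Pi.smul_apply',
    real_smul, ofReal_one, one_mul]
  push_cast
  rw [one_div]

theorem abs_poissonKernel_sub_mul_rpow_le_of_near (hz : ‖z‖ ≤ ‖ζ‖) (hw : ‖w‖ ≤ ‖ζ‖) {α : ℝ}
    (hα : 0 ≤ α) (hnear : ‖ζ - ζ₀‖ ≤ 4 * ‖z - w‖) :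
    |poissonKernel 0 z ζ - poissonKernel 0 w ζ| * ‖ζ - ζ₀‖ ^ α ≤
      (4 * ‖z - w‖) ^ α * (poissonKernel 0 z ζ + poissonKernel 0 w ζ) := by
  have hPz : 0 ≤ poissonKernel 0 z ζ := poissonKernel_nonneg (by simpa only [sub_zero])
  have hPw : 0 ≤ poissonKernel 0 w ζ := poissonKernel_nonneg (by simpa only [sub_zero])
  rw [mul_comm]
  gcongr
  exact abs_sub_le_iff.2 ⟨by linarith, by linarith⟩

theorem abs_poissonKernel_sub_mul_rpow_le_of_far (hζ : ζ ∈ sphere 0 1)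
    (hζ₀ : ‖ζ - ζ₀‖ ≤ 2 * ‖ζ - z‖) {α : ℝ} (hα : α ≤ 2) (hfar : 4 * ‖z - w‖ < ‖ζ - ζ₀‖) :
    |poissonKernel 0 z ζ - poissonKernel 0 w ζ| * ‖ζ - ζ₀‖ ^ α ≤
      16 * ‖z - w‖ * (1 / 2 * ‖ζ - ζ₀‖ + ‖z - w‖) ^ (-(2 - α)) := by
  set d := ‖ζ - ζ₀‖
  set δ := ‖z - w‖
  have hδ : 0 ≤ δ := norm_nonneg _
  have hd : 0 < d := by linarith
  have hz : d / 2 ≤ ‖ζ - z‖ := by linarith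
  have hw : d / 4 ≤ ‖ζ - w‖ := by
    linarith [norm_sub_le_norm_sub_add_norm_sub ζ w z, norm_sub_rev w z]
  have hsub : |poissonKernel 0 z ζ - poissonKernel 0 w ζ| ≤ 16 * δ * d ^ (-2 : ℝ) :=
    calc |poissonKernel 0 z ζ - poissonKernel 0 w ζ|
        ≤ 2 * ‖ζ - 0‖ * δ / (‖ζ - z‖ * ‖ζ - w‖) :=
          abs_poissonKernel_sub_le (sub_ne_zero.1 (norm_pos_iff.1 (by linarith)))
            (sub_ne_zero.1 (norm_pos_iff.1 (by linarith)))
      _ ≤ 2 * ‖ζ - 0‖ * δ / (d / 2 * (d / 4)) := by gcongr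
      _ = 16 * δ * d ^ (-2 : ℝ) := by
          rw [sub_zero, mem_sphere_zero_iff_norm.1 hζ, Real.rpow_neg hd.le, Real.rpow_two]
          field_simp
          ring
  calc |poissonKernel 0 z ζ - poissonKernel 0 w ζ| * d ^ α
      ≤ 16 * δ * d ^ (-2 : ℝ) * d ^ α := by gcongr
    _ = 16 * δ * d ^ (-(2 - α)) := by
        rw [mul_assoc, ← Real.rpow_add hd, neg_sub, neg_add_eq_sub]
    _ ≤ 16 * δ * (1 / 2 * d + δ) ^ (-(2 - α)) := by
        gcongr 16 * δ * ?_
        exact Real.rpow_le_rpow_of_nonpos (by positivity) (by linarith) (by linarith)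

theorem abs_poissonKernel_sub_mul_rpow_le (hz : z ∈ ball 0 1) (hw : w ∈ ball 0 1)
    (hζ : ζ ∈ sphere 0 1) (hζ₀ : ‖ζ - ζ₀‖ ≤ 2 * ‖ζ - z‖) {α : ℝ} (hα : 0 ≤ α) (hα' : α ≤ 2) :
    |poissonKernel 0 z ζ - poissonKernel 0 w ζ| * ‖ζ - ζ₀‖ ^ α ≤
      (4 * ‖z - w‖) ^ α * (poissonKernel 0 z ζ + poissonKernel 0 w ζ) +
        16 * ‖z - w‖ * (1 / 2 * ‖ζ - ζ₀‖ + ‖z - w‖) ^ (-(2 - α)) := by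
  have hzζ : ‖z‖ ≤ ‖ζ‖ := by
    rw [mem_sphere_zero_iff_norm.1 hζ]
    exact (mem_ball_zero_iff.1 hz).le
  have hwζ : ‖w‖ ≤ ‖ζ‖ := by
    rw [mem_sphere_zero_iff_norm.1 hζ]
    exact (mem_ball_zero_iff.1 hw).le
  obtain hnear | hfar := le_or_gt ‖ζ - ζ₀‖ (4 * ‖z - w‖)
  · exact le_add_of_le_of_nonneg
      (abs_poissonKernel_sub_mul_rpow_le_of_near hzζ hwζ hα hnear) (by positivity)
  · have hPz : 0 ≤ poissonKernel 0 z ζ := poissonKernel_nonneg (by simpa only [sub_zero])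
    have hPw : 0 ≤ poissonKernel 0 w ζ := poissonKernel_nonneg (by simpa only [sub_zero])
    exact le_add_of_nonneg_of_le (by positivity)
      (abs_poissonKernel_sub_mul_rpow_le_of_far hζ hζ₀ hα' hfar)

theorem circleIntegrable_abs_poissonKernel_sub_mul_rpow {c : ℂ} {R : ℝ} (hz : z ∈ ball c R)
    (hw : w ∈ ball c R) (ζ₀ : ℂ) {α : ℝ} (hα : 0 ≤ α) :
    CircleIntegrable
      (fun ζ ↦ |poissonKernel c z ζ - poissonKernel c w ζ| * ‖ζ - ζ₀‖ ^ α) c R :=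
  (((continuousOn_poissonKernel_sphere hz).sub (continuousOn_poissonKernel_sphere hw)).abs.mul
    (by fun_prop (disch := exact hα))).circleIntegrable'

theorem circleAverage_abs_poissonKernel_sub_mul_rpow_le (hz : z ∈ ball 0 1) (hw : w ∈ ball 0 1)
    (hzw : z ≠ w) (hζ₀ : ζ₀ ∈ sphere 0 1) (hz₀ : ∀ ζ ∈ sphere 0 1, ‖ζ - ζ₀‖ ≤ 2 * ‖ζ - z‖)
    {α : ℝ} (hα : 0 ≤ α) (hα' : α < 1) :
    circleAverage
        (fun ζ ↦ |poissonKernel 0 z ζ - poissonKernel 0 w ζ| * ‖ζ - ζ₀‖ ^ α) 0 1 ≤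
      (2 * 4 ^ α + 16 / (1 - α)) * ‖z - w‖ ^ α := by
  set δ := ‖z - w‖
  have hδ : 0 < δ := norm_pos_iff.2 (sub_ne_zero.2 hzw)
  have hPz := continuousOn_poissonKernel_sphere hz
  have hPw := continuousOn_poissonKernel_sphere hw
  have hP : CircleIntegrable (poissonKernel 0 z + poissonKernel 0 w) 0 1 :=
    (hPz.add hPw).circleIntegrable'
  have htail : CircleIntegrable (fun ζ ↦ (1 / 2 * ‖ζ - ζ₀‖ + δ) ^ (-(2 - α))) 0 1 :=
    ContinuousOn.circleIntegrable' <| Continuous.continuousOn <|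
      .rpow_const (by fun_prop) fun ζ ↦ .inl (by positivity)
  calc circleAverage
        (fun ζ ↦ |poissonKernel 0 z ζ - poissonKernel 0 w ζ| * ‖ζ - ζ₀‖ ^ α) 0 1
      ≤ circleAverage ((4 * δ) ^ α • (poissonKernel 0 z + poissonKernel 0 w) +
          (16 * δ) • fun ζ ↦ (1 / 2 * ‖ζ - ζ₀‖ + δ) ^ (-(2 - α))) 0 1 :=
        Real.circleAverage_mono (circleIntegrable_abs_poissonKernel_sub_mul_rpow hz hw ζ₀ hα)
          (hP.const_smul.add htail.const_smul) fun ζ hζ ↦ by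
          rw [abs_one] at hζ
          exact abs_poissonKernel_sub_mul_rpow_le hz hw hζ (hz₀ ζ hζ) hα (by linarith)
    _ = (4 * δ) ^ α * 2 +
          16 * δ * circleAverage (fun ζ ↦ (1 / 2 * ‖ζ - ζ₀‖ + δ) ^ (-(2 - α))) 0 1 := by
        rw [Real.circleAverage_add hP.const_smul htail.const_smul, Real.circleAverage_smul,
          Real.circleAverage_smul, Real.circleAverage_add hPz.circleIntegrable'
            hPw.circleIntegrable', circleAverage_poissonKernel hz, circleAverage_poissonKernel hw,
          one_add_one_eq_two, smul_eq_mul, smul_eq_mul]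
    _ ≤ (4 * δ) ^ α * 2 +
          16 * δ * (δ ^ (1 - (2 - α)) / (2 * (1 / 2) * (2 - α - 1))) := by
        gcongr
        exact circleAverage_mul_norm_sub_add_rpow_neg_le one_half_pos hδ (by linarith) hζ₀
    _ = (2 * 4 ^ α + 16 / (1 - α)) * δ ^ α := by
        rw [Real.mul_rpow zero_le_four hδ.le, show 1 - (2 - α) = α - 1 by ring,
          show 2 - α - 1 = 1 - α by ring, Real.rpow_sub_one hδ.ne']
        field_simp

variable {E : Type*} [NormedAddCommGroup E] [NormedSpace ℝ E] {F : ℂ → E}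

theorem circleAverage_poissonKernel_smul_const [CompleteSpace E] {c : ℂ} {R : ℝ}
    (hw : w ∈ ball c R) (v : E) :
    circleAverage (poissonKernel c w • fun _ ↦ v) c R = v := by
  have h := (ContinuousLinearMap.toSpanSingleton ℝ v).circleAverage_comp_comm
    (continuousOn_poissonKernel_sphere hw).circleIntegrable'
  rwa [circleAverage_poissonKernel hw, ContinuousLinearMap.toSpanSingleton_apply, one_smul] at h

theorem circleAverage_poissonKernel_smul_sub [CompleteSpace E] {c : ℂ} {R : ℝ} (hz : z ∈ ball c R)
    (hw : w ∈ ball c R) (hF : ContinuousOn F (sphere c |R|)) (v : E) :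
    circleAverage (poissonKernel c z • F) c R - circleAverage (poissonKernel c w • F) c R =
      circleAverage (fun ζ ↦ (poissonKernel c z ζ - poissonKernel c w ζ) • (F ζ - v)) c R := by
  have hintegrable {u : ℂ} (hu : u ∈ ball c R) {G : ℂ → E} (hG : ContinuousOn G (sphere c |R|)) :
      CircleIntegrable (poissonKernel c u • G) c R :=
    ((continuousOn_poissonKernel_sphere hu).smul hG).circleIntegrable'
  have hmean {u : ℂ} (hu : u ∈ ball c R) :
      circleAverage (poissonKernel c u • fun ζ ↦ F ζ - v) c R =
        circleAverage (poissonKernel c u • F) c R - v := by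
    have hexpand : (poissonKernel c u • fun ζ ↦ F ζ - v) =
        poissonKernel c u • F - poissonKernel c u • fun _ ↦ v := funext fun ζ ↦ smul_sub _ _ _
    rw [hexpand, Real.circleAverage_sub (hintegrable hu hF) (hintegrable hu continuousOn_const),
      circleAverage_poissonKernel_smul_const hu]
  have hFv : ContinuousOn (fun ζ ↦ F ζ - v) (sphere c |R|) := hF.sub continuousOn_const
  calc circleAverage (poissonKernel c z • F) c R -
        circleAverage (poissonKernel c w • F) c R
      = circleAverage (poissonKernel c z • fun ζ ↦ F ζ - v) c R -
          circleAverage (poissonKernel c w • fun ζ ↦ F ζ - v) c R := by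
        rw [hmean hz, hmean hw, sub_sub_sub_cancel_right]
    _ = circleAverage
          (fun ζ ↦ (poissonKernel c z ζ - poissonKernel c w ζ) • (F ζ - v)) c R := by
        rw [← Real.circleAverage_sub (hintegrable hz hFv) (hintegrable hw hFv)]
        simp only [sub_smul]
        rfl

theorem norm_circleAverage_poissonKernel_smul_sub_le [CompleteSpace E] {C r : ℝ≥0} (hr : 0 < r)
    (hr' : r < 1) (hF : HolderOnWith C r F (sphere 0 1)) (hz : z ∈ ball 0 1) (hw : w ∈ ball 0 1) :
    ‖circleAverage (poissonKernel 0 z • F) 0 1 -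
        circleAverage (poissonKernel 0 w • F) 0 1‖ ≤
      C * (2 * 4 ^ (r : ℝ) + 16 / (1 - r)) * ‖z - w‖ ^ (r : ℝ) := by
  obtain rfl | hzw := eq_or_ne z w
  · rw [sub_self, norm_zero]
    have : 0 < 1 - (r : ℝ) := sub_pos.2 hr'
    positivity
  obtain ⟨ζ₀, hζ₀, hz₀⟩ := exists_mem_sphere_forall_norm_sub_le z
  have hbound : ∀ ζ ∈ sphere (0 : ℂ) |1|,
      ‖(poissonKernel 0 z ζ - poissonKernel 0 w ζ) • (F ζ - F ζ₀)‖ ≤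
        C * (|poissonKernel 0 z ζ - poissonKernel 0 w ζ| * ‖ζ - ζ₀‖ ^ (r : ℝ)) := fun ζ hζ ↦ by
    rw [abs_one] at hζ
    have hFζ := hF.dist_le hζ hζ₀
    rw [dist_eq_norm, dist_eq_norm] at hFζ
    grw [norm_smul, Real.norm_eq_abs, hFζ]
    exact (mul_left_comm _ _ _).le
  calc ‖circleAverage (poissonKernel 0 z • F) 0 1 -
        circleAverage (poissonKernel 0 w • F) 0 1‖
      = ‖circleAverage
          (fun ζ ↦ (poissonKernel 0 z ζ - poissonKernel 0 w ζ) • (F ζ - F ζ₀)) 0 1‖ := by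
        rw [circleAverage_poissonKernel_smul_sub hz hw
          (by simpa only [abs_one] using hF.continuousOn hr) (F ζ₀)]
    _ ≤ circleAverage
          (fun ζ ↦ C * (|poissonKernel 0 z ζ - poissonKernel 0 w ζ| * ‖ζ - ζ₀‖ ^ (r : ℝ))) 0 1 :=
        norm_circleAverage_le_of_norm_le
          (circleIntegrable_abs_poissonKernel_sub_mul_rpow hz hw ζ₀ r.coe_nonneg).const_smul hbound
    _ = C * circleAverage
          (fun ζ ↦ |poissonKernel 0 z ζ - poissonKernel 0 w ζ| * ‖ζ - ζ₀‖ ^ (r : ℝ)) 0 1 :=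
        Real.circleAverage_fun_smul (a := (C : ℝ))
    _ ≤ C * ((2 * 4 ^ (r : ℝ) + 16 / (1 - r)) * ‖z - w‖ ^ (r : ℝ)) := by
        gcongr
        exact circleAverage_abs_poissonKernel_sub_mul_rpow_le hz hw hzw hζ₀ hz₀ r.coe_nonneg hr'
    _ = C * (2 * 4 ^ (r : ℝ) + 16 / (1 - r)) * ‖z - w‖ ^ (r : ℝ) := (mul_assoc _ _ _).symm

end PoissonIntegral

/-- For `p ∈ (1,∞)` with conjugate exponent `q = p/(p-1)`, `F : 𝕋 → ℂ`
absolutely continuous with `Ḟ ∈ L^p(𝕋)` and `f = P[F]`, the function `f` is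
`(1/q)`-Hölder continuous on `𝔻`. -/
theorem stmt18 (p q : ℝ) (hp : 1 < p) (hq : q = p / (p - 1)) (F : ℂ → ℂ) (Fd : ℝ → ℂ)
    (hF : IsACDeriv F Fd) (hLp : MemLpT (ENNReal.ofReal p) Fd) :
    ∃ L : ℝ, 0 < L ∧ ∀ z ∈ ball (0:ℂ) 1, ∀ w ∈ ball (0:ℂ) 1,
      ‖poissonInt F z - poissonInt F w‖ ≤ L * ‖z - w‖ ^ (1 / q) := by
  have hqp : q.HolderConjugate p := ((Real.holderConjugate_iff_eq_conjExponent hp).2 hq).symm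
  obtain ⟨r, hr⟩ : ∃ r : ℝ≥0, (r : ℝ) = 1 / q := ⟨⟨1 / q, hqp.one_div_nonneg⟩, rfl⟩
  have hr_pos : (0 : ℝ) < r := hr ▸ hqp.one_div_pos
  have hr_lt : (r : ℝ) < 1 := by
    rw [hr, one_div]
    exact inv_lt_one_of_one_lt₀ hqp.lt
  have hrp : (r : ℝ) = 1 - 1 / (ENNReal.ofReal p).toReal := by
    rw [ENNReal.toReal_ofReal hqp.symm.nonneg, hr, one_div, one_div, hqp.symm.one_sub_inv]
  obtain ⟨C, hC⟩ := hF.exists_holderOnWith_sphere (ENNReal.one_le_ofReal.2 hp.le) hLp hrp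
  set K : ℝ := C * (2 * 4 ^ (r : ℝ) + 16 / (1 - r))
  have hK_nonneg : 0 ≤ K := by
    have : 0 < 1 - (r : ℝ) := sub_pos.2 hr_lt
    positivity
  refine ⟨K + 1, add_pos_of_nonneg_of_pos hK_nonneg one_pos, fun z hz w hw ↦ ?_⟩
  calc ‖poissonInt F z - poissonInt F w‖
      ≤ K * ‖z - w‖ ^ (1 / q) := by
        rw [poissonInt_eq_circleAverage, poissonInt_eq_circleAverage, ← hr]
        exact norm_circleAverage_poissonKernel_smul_sub_le hr_pos hr_lt hC hz hw
    _ ≤ (K + 1) * ‖z - w‖ ^ (1 / q) := by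
        gcongr
        exact (lt_add_one K).le

end
end

section
/- Let 0 < α ≤ 1, C > 0, and let f : 𝔻 → ℂ be continuously differentiable with |f_z(z)| + |f_z̄(z)| ≤ C / (1 − |z|²)^{1−α} for all z ∈ 𝔻. Then f is α-Hölder continuous on 𝔻, i.e., there exists L > 0 such that |f(z) − f(w)| ≤ L |z − w|^α for all z, w ∈ 𝔻. -/
open MeasureTheory Complex Metric Set Filter
open scoped Real Topology ENNReal

noncomputable section

/-!
The operator norm of `Df z` is `|f_z| + |f_z̄|` and `1 - |z| ≤ 1 - |z|²`, so `‖Df z‖` is at most `C`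
times the power `α - 1` of the distance from `z` to the boundary. In any ball of radius `R`, two
points at distance `d` are joined through the Hardy–Littlewood path: each endpoint is moved towards
the center until it is at distance at least `δ = min d R` from the boundary, and the two new points
are joined by a segment. On a radial segment starting at `x`, the distance to `x` is a lower bound
for the distance to the boundary, so the derivative is at most `C * t ^ (α - 1)` at distance `t`
from `x`, which is integrable because `α > 0`. On the middle segment, of length at most `δ`, the
derivative is at most `C * δ ^ (α - 1)`.
-/

theorem fderiv_apply_eq_wdz_add_wdzb (f : ℂ → ℂ) (z v : ℂ) :
    fderiv ℝ f z v = wdz f z * v + wdzb f z * (starRingEnd ℂ) v := by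
  have hv : fderiv ℝ f z v = v.re * fderiv ℝ f z 1 + v.im * fderiv ℝ f z I := by
    conv_lhs => rw [← re_add_im v, ← mul_one (v.re : ℂ), ← real_smul, ← real_smul, map_add,
      map_smul, map_smul, real_smul, real_smul]
  have hconj : (starRingEnd ℂ) v = v.re - v.im * I := by
    apply Complex.ext <;> simp
  rw [hv, hconj, wdz, wdzb]
  linear_combination ((v.im : ℂ) * fderiv ℝ f z I) * I_sq
    + (1 / 2) * (fderiv ℝ f z 1 - I * fderiv ℝ f z I) * re_add_im v

theorem norm_fderiv_le_norm_wdz_add_norm_wdzb (f : ℂ → ℂ) (z : ℂ) :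
    ‖fderiv ℝ f z‖ ≤ ‖wdz f z‖ + ‖wdzb f z‖ := by
  refine ContinuousLinearMap.opNorm_le_bound _ (by positivity) fun v ↦ ?_
  rw [fderiv_apply_eq_wdz_add_wdzb]
  refine (norm_add_le _ _).trans_eq ?_
  rw [norm_mul, norm_mul, RCLike.norm_conj, add_mul]

theorem div_one_sub_sq_rpow_le {α C x : ℝ} (hα1 : α ≤ 1) (hC : 0 ≤ C) (hx0 : 0 ≤ x) (hx1 : x < 1) :
    C / (1 - x ^ 2) ^ (1 - α) ≤ C * (1 - x) ^ (α - 1) := by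
  have hx : 0 < 1 - x := sub_pos.2 hx1
  have hsq : 1 - x ≤ 1 - x ^ 2 := by nlinarith
  rw [← neg_sub 1 α, Real.rpow_neg hx.le, ← div_eq_mul_inv]
  gcongr

theorem norm_fderiv_le_mul_rpow_of_norm_wdz_add_norm_wdzb_le {f : ℂ → ℂ} {z : ℂ} {α C : ℝ}
    (hα1 : α ≤ 1) (hC : 0 ≤ C) (hz : z ∈ ball 0 1)
    (hb : ‖wdz f z‖ + ‖wdzb f z‖ ≤ C / (1 - ‖z‖ ^ 2) ^ (1 - α)) :
    ‖fderiv ℝ f z‖ ≤ C * (1 - dist z 0) ^ (α - 1) := by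
  rw [dist_zero_right]
  exact (norm_fderiv_le_norm_wdz_add_norm_wdzb f z).trans <| hb.trans <|
    div_one_sub_sq_rpow_le hα1 hC (norm_nonneg z) (mem_ball_zero_iff.1 hz)

section NormedSpace

variable {E F : Type*} [NormedAddCommGroup E] [NormedSpace ℝ E]
  [NormedAddCommGroup F] [NormedSpace ℝ F] {f : E → F} {c x y : E} {α C R r : ℝ}

theorem norm_sub_le_of_norm_deriv_le_rpow {g : ℝ → F} {b K : ℝ} (hα : 0 < α) (hb : 0 ≤ b)
    (hgc : ContinuousOn g (Icc 0 b)) (hgd : DifferentiableOn ℝ g (Ioo 0 b))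
    (hg : ∀ t ∈ Ioo 0 b, ‖deriv g t‖ ≤ K * t ^ (α - 1)) :
    ‖g b - g 0‖ ≤ K / α * b ^ α := calc
  ‖g b - g 0‖ ≤ ∫ t in 0..b, K * t ^ (α - 1) :=
    norm_sub_le_integral_of_norm_deriv_le_of_le hb hgc hgd (.of_forall hg)
      ((intervalIntegral.intervalIntegrable_rpow' (by linarith)).const_mul K)
  _ = K / α * b ^ α := by
    rw [intervalIntegral.integral_const_mul, integral_rpow (Or.inl (by linarith)), sub_add_cancel,
      Real.zero_rpow hα.ne', sub_zero, mul_div_assoc', mul_div_right_comm]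

theorem norm_image_sub_le_of_norm_fderiv_le_rpow_dist (hα : 0 < α)
    (hfc : ContinuousOn f (segment ℝ x y)) (hfd : ∀ z ∈ openSegment ℝ x y, DifferentiableAt ℝ f z)
    (hb : ∀ z ∈ openSegment ℝ x y, ‖fderiv ℝ f z‖ ≤ C * dist z x ^ (α - 1)) :
    ‖f y - f x‖ ≤ C / α * dist x y ^ α := by
  set p : ℝ →ᵃ[ℝ] E := AffineMap.lineMap x y
  have hp : ∀ t ∈ Ioo (0 : ℝ) 1, p t ∈ openSegment ℝ x y := fun t ht ↦
    openSegment_eq_image_lineMap ℝ x y ▸ mem_image_of_mem _ ht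
  have hderiv : ∀ t ∈ Ioo (0 : ℝ) 1, HasDerivAt (f ∘ p) (fderiv ℝ f (p t) (y - x)) t :=
    fun t ht ↦ (hfd _ (hp t ht)).hasFDerivAt.comp_hasDerivAt t AffineMap.hasDerivAt_lineMap
  have hcont : ContinuousOn (f ∘ p) (Icc 0 1) :=
    hfc.comp AffineMap.lineMap_continuous.continuousOn fun t ht ↦
      segment_eq_image_lineMap ℝ x y ▸ mem_image_of_mem _ ht
  have hspeed : ∀ t ∈ Ioo (0 : ℝ) 1,
      ‖deriv (f ∘ p) t‖ ≤ C * dist x y ^ α * t ^ (α - 1) := fun t ht ↦ calc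
    ‖deriv (f ∘ p) t‖ ≤ ‖fderiv ℝ f (p t)‖ * ‖y - x‖ := by
      rw [(hderiv t ht).deriv]
      exact ContinuousLinearMap.le_opNorm _ _
    _ ≤ C * dist (p t) x ^ (α - 1) * ‖y - x‖ := by gcongr; exact hb _ (hp t ht)
    _ = C * (dist x y ^ (α - 1) * dist x y) * t ^ (α - 1) := by
      rw [dist_lineMap_left, Real.norm_of_nonneg ht.1.le, Real.mul_rpow ht.1.le dist_nonneg,
        ← dist_eq_norm']
      ring
    _ = C * dist x y ^ α * t ^ (α - 1) := by
      rw [← Real.rpow_add_one' dist_nonneg (by linarith), sub_add_cancel]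
  have hdisp := norm_sub_le_of_norm_deriv_le_rpow hα zero_le_one hcont
    (fun t ht ↦ (hderiv t ht).differentiableAt.differentiableWithinAt) hspeed
  calc
    ‖f y - f x‖ = ‖(f ∘ p) 1 - (f ∘ p) 0‖ := by simp [p]
    _ ≤ C * dist x y ^ α / α * 1 ^ α := hdisp
    _ = C / α * dist x y ^ α := by rw [Real.one_rpow, mul_one, mul_div_right_comm]

theorem norm_image_sub_le_of_mem_segment_center (hα : 0 < α) (hα1 : α ≤ 1) (hC : 0 ≤ C)
    (hf : DifferentiableOn ℝ f (ball c R))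
    (hb : ∀ z ∈ ball c R, ‖fderiv ℝ f z‖ ≤ C * (R - dist z c) ^ (α - 1))
    (hx : x ∈ ball c R) (hy : y ∈ segment ℝ x c) :
    ‖f y - f x‖ ≤ C / α * dist x y ^ α := by
  rcases eq_or_ne x y with rfl | hxy
  · simp [Real.zero_rpow hα.ne']
  have hc : c ∈ ball c R := mem_ball_self (pos_of_mem_ball hx)
  have hsub : segment ℝ x y ⊆ segment ℝ x c :=
    (convex_segment x c).segment_subset (left_mem_segment ℝ x c) hy
  have hball : segment ℝ x y ⊆ ball c R := hsub.trans ((convex_ball c R).segment_subset hx hc)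
  refine norm_image_sub_le_of_norm_fderiv_le_rpow_dist hα (hf.continuousOn.mono hball)
    (fun z hz ↦ hf.differentiableAt
      (isOpen_ball.mem_nhds (hball (openSegment_subset_segment ℝ x y hz)))) fun z hz ↦ ?_
  have hzxy := openSegment_subset_segment ℝ x y hz
  have hzx : 0 < dist z x := dist_pos.2 fun h ↦ hxy <| left_mem_openSegment_iff.1 (h ▸ hz)
  have hboundary : dist z x ≤ R - dist z c := by
    linarith [dist_add_dist_of_mem_segment (hsub hzxy), dist_comm x z, mem_ball.1 hx]
  calc
    ‖fderiv ℝ f z‖ ≤ C * (R - dist z c) ^ (α - 1) := hb z (hball hzxy)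
    _ ≤ C * dist z x ^ (α - 1) :=
      mul_le_mul_of_nonneg_left (Real.rpow_le_rpow_of_nonpos hzx hboundary (by linarith)) hC

theorem norm_image_sub_le_of_mem_closedBall (hα1 : α ≤ 1) (hC : 0 ≤ C)
    (hf : DifferentiableOn ℝ f (ball c R))
    (hb : ∀ z ∈ ball c R, ‖fderiv ℝ f z‖ ≤ C * (R - dist z c) ^ (α - 1)) (hr : r < R)
    (hx : x ∈ closedBall c r) (hy : y ∈ closedBall c r) :
    ‖f y - f x‖ ≤ C * (R - r) ^ (α - 1) * ‖y - x‖ := by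
  have hball : closedBall c r ⊆ ball c R := closedBall_subset_ball hr
  refine (convex_closedBall c r).norm_image_sub_le_of_norm_fderiv_le (𝕜 := ℝ)
    (fun z hz ↦ hf.differentiableAt (isOpen_ball.mem_nhds (hball hz))) (fun z hz ↦ ?_) hx hy
  refine (hb z (hball hz)).trans (mul_le_mul_of_nonneg_left ?_ hC)
  exact Real.rpow_le_rpow_of_nonpos (sub_pos.2 hr) (sub_le_sub_left hz R) (by linarith)

theorem dist_lineMap_lineMap_same_right (t : ℝ) :
    dist (AffineMap.lineMap x c t) (AffineMap.lineMap y c t) = ‖1 - t‖ * dist x y := by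
  rw [AffineMap.lineMap_apply_module, AffineMap.lineMap_apply_module, dist_add_right, dist_smul₀]

theorem lineMap_center_mem_closedBall {t : ℝ} (ht : t ≤ 1) (hx : x ∈ closedBall c R) :
    AffineMap.lineMap x c t ∈ closedBall c ((1 - t) * R) := by
  rw [mem_closedBall, dist_lineMap_right, Real.norm_of_nonneg (sub_nonneg.2 ht)]
  exact mul_le_mul_of_nonneg_left hx (sub_nonneg.2 ht)

theorem norm_image_lineMap_center_sub_le {t : ℝ} (hα : 0 < α) (hα1 : α ≤ 1) (hC : 0 ≤ C)
    (hf : DifferentiableOn ℝ f (ball c R))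
    (hb : ∀ z ∈ ball c R, ‖fderiv ℝ f z‖ ≤ C * (R - dist z c) ^ (α - 1))
    (ht : t ∈ Icc 0 1) (hx : x ∈ ball c R) :
    ‖f (AffineMap.lineMap x c t) - f x‖ ≤ C / α * (t * R) ^ α := by
  have hmem : AffineMap.lineMap x c t ∈ segment ℝ x c :=
    segment_eq_image_lineMap ℝ x c ▸ mem_image_of_mem _ ht
  have hdist : dist x (AffineMap.lineMap x c t) ≤ t * R := by
    rw [dist_left_lineMap, Real.norm_of_nonneg ht.1]
    exact mul_le_mul_of_nonneg_left (mem_ball.1 hx).le ht.1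
  refine (norm_image_sub_le_of_mem_segment_center hα hα1 hC hf hb hx hmem).trans ?_
  gcongr

theorem norm_image_sub_le_of_one_sub_mul_dist_le {t : ℝ} (hα : 0 < α) (hα1 : α ≤ 1) (hC : 0 ≤ C)
    (hf : DifferentiableOn ℝ f (ball c R))
    (hb : ∀ z ∈ ball c R, ‖fderiv ℝ f z‖ ≤ C * (R - dist z c) ^ (α - 1))
    (hx : x ∈ ball c R) (hy : y ∈ ball c R) (ht0 : 0 < t) (ht1 : t ≤ 1)
    (hxy : (1 - t) * dist x y ≤ t * R) :
    ‖f x - f y‖ ≤ C * (1 + 2 / α) * (t * R) ^ α := by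
  have hδ : 0 < t * R := mul_pos ht0 (pos_of_mem_ball hx)
  set x' := AffineMap.lineMap x c t
  set y' := AffineMap.lineMap y c t
  have hradial_x : ‖f x - f x'‖ ≤ C / α * (t * R) ^ α :=
    norm_sub_rev (f x') (f x) ▸
      norm_image_lineMap_center_sub_le hα hα1 hC hf hb ⟨ht0.le, ht1⟩ hx
  have hradial_y : ‖f y' - f y‖ ≤ C / α * (t * R) ^ α :=
    norm_image_lineMap_center_sub_le hα hα1 hC hf hb ⟨ht0.le, ht1⟩ hy
  have hmiddle : ‖f x' - f y'‖ ≤ C * (t * R) ^ α := calc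
    ‖f x' - f y'‖ ≤ C * (R - (1 - t) * R) ^ (α - 1) * ‖x' - y'‖ :=
      norm_image_sub_le_of_mem_closedBall hα1 hC hf hb (by linarith)
        (lineMap_center_mem_closedBall ht1 (ball_subset_closedBall hy))
        (lineMap_center_mem_closedBall ht1 (ball_subset_closedBall hx))
    _ = C * (t * R) ^ (α - 1) * ((1 - t) * dist x y) := by
      rw [← dist_eq_norm, dist_lineMap_lineMap_same_right, Real.norm_of_nonneg (sub_nonneg.2 ht1)]
      ring_nf
    _ ≤ C * (t * R) ^ (α - 1) * (t * R) := by gcongr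
    _ = C * (t * R) ^ α := by
      rw [mul_assoc, ← Real.rpow_add_one hδ.ne', sub_add_cancel]
  calc
    ‖f x - f y‖ ≤ ‖f x - f x'‖ + ‖f x' - f y'‖ + ‖f y' - f y‖ := by
      simpa only [dist_eq_norm] using dist_triangle4 (f x) (f x') (f y') (f y)
    _ ≤ C / α * (t * R) ^ α + C * (t * R) ^ α + C / α * (t * R) ^ α := by gcongr
    _ = C * (1 + 2 / α) * (t * R) ^ α := by ring

theorem stmt19_general (hα : 0 < α) (hα1 : α ≤ 1) (hC : 0 ≤ C)
    (hf : DifferentiableOn ℝ f (ball c R))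
    (hb : ∀ z ∈ ball c R, ‖fderiv ℝ f z‖ ≤ C * (R - dist z c) ^ (α - 1))
    (hx : x ∈ ball c R) (hy : y ∈ ball c R) :
    ‖f x - f y‖ ≤ C * (1 + 2 / α) * ‖x - y‖ ^ α := by
  rw [← dist_eq_norm x y]
  rcases eq_or_ne x y with rfl | hne
  · simp [Real.zero_rpow hα.ne']
  have hR : 0 < R := pos_of_mem_ball hx
  have hd : 0 < dist x y := dist_pos.2 hne
  rcases le_total (dist x y) R with hdR | hRd
  · have hdiv : dist x y / R * R = dist x y := div_mul_cancel₀ _ hR.ne'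
    have hshrink : (1 - dist x y / R) * dist x y ≤ dist x y / R * R := by
      rw [hdiv]
      exact mul_le_of_le_one_left hd.le (sub_le_self 1 (by positivity))
    exact hdiv ▸ norm_image_sub_le_of_one_sub_mul_dist_le hα hα1 hC hf hb hx hy
      (div_pos hd hR) ((div_le_one hR).2 hdR) hshrink
  · calc
      ‖f x - f y‖ ≤ C * (1 + 2 / α) * (1 * R) ^ α :=
        norm_image_sub_le_of_one_sub_mul_dist_le hα hα1 hC hf hb hx hy one_pos le_rfl
          (by linarith)
      _ ≤ C * (1 + 2 / α) * dist x y ^ α := by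
        rw [one_mul]
        gcongr

end NormedSpace

/-- (Gehring–Martio) Let `0 < α ≤ 1`, `C > 0` and let `f : 𝔻 → ℂ` be
`C¹` with `|f_z(z)| + |f_z̄(z)| ≤ C/(1-|z|²)^{1-α}` on `𝔻`. Then `f` is `α`-Hölder
continuous on `𝔻`. -/
theorem stmt19 (α C : ℝ) (hα : 0 < α) (hα1 : α ≤ 1) (hC : 0 < C) (f : ℂ → ℂ)
    (hf : ContDiffOn ℝ 1 f (ball (0:ℂ) 1))
    (hb : ∀ z ∈ ball (0:ℂ) 1, ‖wdz f z‖ + ‖wdzb f z‖ ≤ C / (1 - ‖z‖ ^ 2) ^ (1 - α)) :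
    ∃ L : ℝ, 0 < L ∧ ∀ z ∈ ball (0:ℂ) 1, ∀ w ∈ ball (0:ℂ) 1,
      ‖f z - f w‖ ≤ L * ‖z - w‖ ^ α := by
  refine ⟨C * (1 + 2 / α), by positivity, fun z hz w hw ↦ ?_⟩
  exact stmt19_general hα hα1 hC.le (hf.differentiableOn one_ne_zero) (fun u hu ↦
    norm_fderiv_le_mul_rpow_of_norm_wdz_add_norm_wdzb_le hα1 hC.le hu (hb u hu)) hz hw

end
end
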